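/- arXiv:math/0508227 — 12 statements merged into one kernel-verified Lean document; each statement's English description precedes it below -/
import Mathlib

section
/- Let β > 0 and δ > 0. Consider the generalized continued fraction with initial term b₀ = 2β, partial numerators a_k = ((k+1)(k+2)/2)·δ (the triangular numbers 3, 6, 10, 15, ... times δ), and partial denominators b_k = (k+2)·β for k ≥ 1. Then the sequence of convergents h_n/k_n converges to β + √(β² + 2δ). -/
/-!
An equivalence transformation with factors `c k = k + 2` turns the fraction into twice the periodic
fraction `β + (δ / 2) / (β + (δ / 2) / (β + ⋯))`, whose convergents are quotients of consecutive
terms of the Lucas sequence of `X ^ 2 - β X - δ / 2`. By Binet's formula these quotients tend to the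
dominant root `(β + √(β ^ 2 + 2 δ)) / 2`.
-/

open Filter Topology

/-- The Lucas sequence `Uₙ(P, Q)` of the first kind, attached to the polynomial `X ^ 2 - P X + Q`;
it supplies the numerators and denominators of the convergents of the periodic continued fraction
`P + (-Q) / (P + (-Q) / (P + ⋯))`. -/
def lucasU {R : Type*} [Ring R] (P Q : R) : ℕ → R
  | 0 => 0
  | 1 => 1
  | n + 2 => P * lucasU P Q (n + 1) - Q * lucasU P Q n

theorem sub_mul_lucasU_add_mul {R : Type*} [CommRing R] (p q : R) (n : ℕ) :
    (p - q) * lucasU (p + q) (p * q) n = p ^ n - q ^ n := by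
  induction n using Nat.twoStepInduction with
  | zero => simp [lucasU]
  | one => simp [lucasU]
  | more n ih₀ ih₁ =>
    rw [lucasU]
    linear_combination (p + q) * ih₁ - p * q * ih₀

theorem eq_prod_mul_of_equivalent_recurrence {R : Type*} [CommSemiring R] {a b c u x : ℕ → R}
    (hu : ∀ n, u (n + 2) = b (n + 1) * u (n + 1) + a (n + 1) * u n)
    (hx : ∀ n, x (n + 2) = c (n + 1) * b (n + 1) * x (n + 1) + c n * c (n + 1) * a (n + 1) * x n)
    (h₀ : x 0 = u 0) (h₁ : x 1 = c 0 * u 1) (n : ℕ) :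
    x n = (∏ i ∈ Finset.range n, c i) * u n := by
  induction n using Nat.twoStepInduction with
  | zero => simp [h₀]
  | one => simp [h₁]
  | more n ih₀ ih₁ =>
    rw [hx, hu, ih₀, ih₁]
    simp only [Finset.prod_range_succ]
    ring

section Dominant

variable {𝕜 : Type*} [NormedField 𝕜] {p q : 𝕜}

theorem tendsto_pow_succ_sub_div_pow_sub (hqp : ‖q‖ < ‖p‖) :
    Tendsto (fun n : ℕ => (p ^ (n + 1) - q ^ (n + 1)) / (p ^ n - q ^ n)) atTop (𝓝 p) := by
  have hp : p ≠ 0 := norm_pos_iff.mp ((norm_nonneg q).trans_lt hqp)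
  have hratio : Tendsto (fun n : ℕ => (q / p) ^ n) atTop (𝓝 0) := by
    refine tendsto_pow_atTop_nhds_zero_of_norm_lt_one ?_
    rwa [norm_div, div_lt_one (norm_pos_iff.mpr hp)]
  have hlim : Tendsto (fun n : ℕ => (p - q * (q / p) ^ n) / (1 - (q / p) ^ n)) atTop (𝓝 p) := by
    simpa [Pi.div_def] using ((hratio.const_mul q).const_sub p).div (hratio.const_sub 1) (by simp)
  refine hlim.congr fun n => ?_
  have hpn : p ^ n ≠ 0 := pow_ne_zero n hp
  have hqn : p ^ n * (q / p) ^ n = q ^ n := by rw [← mul_pow, mul_div_cancel₀ q hp]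
  calc (p - q * (q / p) ^ n) / (1 - (q / p) ^ n)
      = (p ^ n * (p - q * (q / p) ^ n)) / (p ^ n * (1 - (q / p) ^ n)) :=
        (mul_div_mul_left _ _ hpn).symm
    _ = (p ^ (n + 1) - q ^ (n + 1)) / (p ^ n - q ^ n) := by
        congr 1
        · linear_combination -q * hqn
        · linear_combination -hqn

theorem tendsto_lucasU_succ_div_lucasU (hqp : ‖q‖ < ‖p‖) :
    Tendsto (fun n => lucasU (p + q) (p * q) (n + 1) / lucasU (p + q) (p * q) n) atTop (𝓝 p) := by
  have hsub : p - q ≠ 0 := sub_ne_zero.mpr fun h => hqp.ne (congrArg norm h.symm)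
  refine (tendsto_pow_succ_sub_div_pow_sub hqp).congr fun n => ?_
  rw [← sub_mul_lucasU_add_mul, ← sub_mul_lucasU_add_mul, mul_div_mul_left _ _ hsub]

theorem tendsto_convergents_of_equivalent_periodic {c num den : ℕ → 𝕜} (hqp : ‖q‖ < ‖p‖)
    (hc : ∀ n, c n ≠ 0)
    (hnum₀ : num 0 = 1) (hnum₁ : num 1 = c 0 * (p + q))
    (hden₀ : den 0 = 0) (hden₁ : den 1 = 1)
    (hnum : ∀ n, num (n + 2) =
      c (n + 1) * (p + q) * num (n + 1) + c n * c (n + 1) * -(p * q) * num n)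
    (hden : ∀ n, den (n + 2) =
      c (n + 1) * (p + q) * den (n + 1) + c n * c (n + 1) * -(p * q) * den n) :
    Tendsto (fun n => num (n + 1) / den (n + 1)) atTop (𝓝 (c 0 * p)) := by
  set U := lucasU (p + q) (p * q)
  have hU (n : ℕ) : U (n + 2) = (p + q) * U (n + 1) + -(p * q) * U n := by
    simp only [U, lucasU]
    ring
  have hnum_eq (n : ℕ) : num n = (∏ i ∈ Finset.range n, c i) * U (n + 1) :=
    eq_prod_mul_of_equivalent_recurrence (a := fun _ => -(p * q)) (b := fun _ => p + q)
      (u := fun n => U (n + 1)) (fun n => hU (n + 1)) hnum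
      (by simp [hnum₀, U, lucasU]) (by simp [hnum₁, U, lucasU]) n
  have hden_eq (n : ℕ) : den n = (∏ i ∈ Finset.range n, c i) * (U n / c 0) :=
    eq_prod_mul_of_equivalent_recurrence (a := fun _ => -(p * q)) (b := fun _ => p + q)
      (u := fun n => U n / c 0) (fun n => by rw [hU]; ring) hden
      (by simp [hden₀, U, lucasU]) (by simp [hden₁, U, lucasU, hc 0]) n
  have hlim : Tendsto (fun n => c 0 * (U (n + 2) / U (n + 1))) atTop (𝓝 (c 0 * p)) :=
    ((tendsto_lucasU_succ_div_lucasU hqp).comp (tendsto_add_atTop_nat 1)).const_mul (c 0)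
  refine hlim.congr fun n => ?_
  have hprod : ∏ i ∈ Finset.range (n + 1), c i ≠ 0 := Finset.prod_ne_zero_iff.mpr fun i _ => hc i
  rw [hnum_eq, hden_eq, mul_div_mul_left _ _ hprod, div_div_eq_mul_div, mul_comm,
    div_mul_eq_mul_div]

end Dominant

theorem euler_cf_triangular_general {𝕜 : Type*} [NormedField 𝕜] [CharZero 𝕜]
    {β δ s : 𝕜} {a b num den : ℕ → 𝕜}
    (hs : s ^ 2 = β ^ 2 + 2 * δ) (hdom : ‖β - s‖ < ‖β + s‖)
    (hb0 : b 0 = 2 * β)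
    (ha : ∀ k : ℕ, 1 ≤ k → a k = ((k + 1) * (k + 2) / 2 : 𝕜) * δ)
    (hb : ∀ k : ℕ, 1 ≤ k → b k = ((k : 𝕜) + 2) * β)
    (hnum0 : num 0 = 1) (hnum1 : num 1 = b 0)
    (hden0 : den 0 = 0) (hden1 : den 1 = 1)
    (hnum : ∀ n : ℕ, num (n + 2) = b (n + 1) * num (n + 1) + a (n + 1) * num n)
    (hden : ∀ n : ℕ, den (n + 2) = b (n + 1) * den (n + 1) + a (n + 1) * den n) :
    Tendsto (fun n : ℕ => num (n + 1) / den (n + 1)) atTop (𝓝 (β + s)) := by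
  set p := (β + s) / 2 with hp
  set q := (β - s) / 2 with hq
  have hadd : p + q = β := by ring
  have hmul : -(p * q) = δ / 2 := by linear_combination hs / 4
  have hqp : ‖q‖ < ‖p‖ := by
    rw [hp, hq, norm_div, norm_div]
    gcongr
    exact norm_pos_iff.mpr two_ne_zero
  have hb' (n : ℕ) : b (n + 1) = ((n + 1 : ℕ) + 2 : 𝕜) * (p + q) := by
    rw [hb _ n.succ_pos, hadd]
  have ha' (n : ℕ) : a (n + 1) = (n + 2) * ((n + 1 : ℕ) + 2 : 𝕜) * -(p * q) := by
    rw [ha _ n.succ_pos, hmul]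
    push_cast
    ring
  have hlim := tendsto_convergents_of_equivalent_periodic (c := fun n => (n + 2 : 𝕜)) hqp
    (fun n => mod_cast (n + 1).succ_ne_zero) hnum0 (by simp [hnum1, hb0, hadd]) hden0 hden1
    (fun n => by rw [hnum, ha', hb']) (fun n => by rw [hden, ha', hb'])
  convert hlim using 2
  simp [hp, mul_div_cancel₀]

theorem euler_cf_triangular
    (β δ : ℝ) (a b num den : ℕ → ℝ)
    (hβ : 0 < β) (hδ : 0 < δ)
    (hb0 : b 0 = 2 * β)
    (ha : ∀ k : ℕ, 1 ≤ k → a k = ((k + 1) * (k + 2) / 2 : ℝ) * δ)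
    (hb : ∀ k : ℕ, 1 ≤ k → b k = ((k : ℝ) + 2) * β)
    (hnum0 : num 0 = 1) (hnum1 : num 1 = b 0)
    (hden0 : den 0 = 0) (hden1 : den 1 = 1)
    (hnum : ∀ n : ℕ, num (n + 2) = b (n + 1) * num (n + 1) + a (n + 1) * num n)
    (hden : ∀ n : ℕ, den (n + 2) = b (n + 1) * den (n + 1) + a (n + 1) * den n) :
    Tendsto (fun n : ℕ => num (n + 1) / den (n + 1)) atTop
      (𝓝 (β + Real.sqrt (β ^ 2 + 2 * δ))) := by
  have hs : 0 < √(β ^ 2 + 2 * δ) := Real.sqrt_pos.mpr (by positivity)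
  exact euler_cf_triangular_general (Real.sq_sqrt (by positivity))
    (sq_lt_sq.mp (by linarith [mul_pos hβ hs])) hb0 ha hb hnum0 hnum1 hden0 hden1 hnum hden
end

section
/- Let a > 0, let α, β be real numbers such that α + β·x ≠ 0 for all x in the interval [0, a], and let n ≥ 1 be a natural number. Then n·a·α·∫₀^a x^{n-1}/(α + βx) dx = ((n+1)·α − n·β·a)·∫₀^a x^n/(α + βx) dx + (n+1)·β·∫₀^a x^{n+1}/(α + βx) dx. -/
/-! Cancelling `α + β x` shows that the moments `I_k = ∫₀^a x^k / (α + β x) dx` satisfy the two-term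
relation `α I_k + β I_{k+1} = ∫₀^a x^k dx = a^{k+1} / (k+1)`. Weighting the relation for `k = n - 1`
by `n a` and that for `k = n` by `n + 1` makes both right-hand sides `a^{n+1}`, and their difference
is the recurrence. In Euler's form, this difference integrates the derivative of `x^n (a - x)`,
which vanishes at both ends. -/

open MeasureTheory Set

section Moments

variable {𝕜 : Type*} [RCLike 𝕜] {u v : ℝ} {α β : 𝕜}

theorem integral_ofReal_pow (k : ℕ) :
    ∫ x in u..v, (x : 𝕜) ^ k = ((v : 𝕜) ^ (k + 1) - (u : 𝕜) ^ (k + 1)) / ((k : 𝕜) + 1) := by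
  have h := RCLike.intervalIntegral_ofReal (𝕜 := 𝕜) (μ := volume) (a := u) (b := v)
    (f := fun x ↦ x ^ k)
  simpa only [integral_pow, RCLike.ofReal_pow, RCLike.ofReal_div, RCLike.ofReal_sub,
    RCLike.ofReal_add, RCLike.ofReal_natCast, RCLike.ofReal_one] using h

theorem intervalIntegrable_ofReal_pow_div_linear (hne : ∀ x ∈ uIcc u v, α + β * (x : 𝕜) ≠ 0)
    (k : ℕ) : IntervalIntegrable (fun x : ℝ ↦ (x : 𝕜) ^ k / (α + β * (x : 𝕜))) volume u v :=
  (ContinuousOn.div (by fun_prop) (by fun_prop) hne).intervalIntegrable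

theorem add_integral_ofReal_pow_div_linear (hne : ∀ x ∈ uIcc u v, α + β * (x : 𝕜) ≠ 0) (k : ℕ) :
    α * (∫ x in u..v, (x : 𝕜) ^ k / (α + β * (x : 𝕜))) +
        β * (∫ x in u..v, (x : 𝕜) ^ (k + 1) / (α + β * (x : 𝕜))) =
      ((v : 𝕜) ^ (k + 1) - (u : 𝕜) ^ (k + 1)) / ((k : 𝕜) + 1) := by
  have hint := intervalIntegrable_ofReal_pow_div_linear hne
  have hcancel : ∀ x ∈ uIcc u v, α * ((x : 𝕜) ^ k / (α + β * (x : 𝕜))) +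
      β * ((x : 𝕜) ^ (k + 1) / (α + β * (x : 𝕜))) = (x : 𝕜) ^ k := by
    intro x hx
    have := hne x hx
    field_simp
    ring
  rw [← integral_ofReal_pow, ← intervalIntegral.integral_congr hcancel,
    intervalIntegral.integral_add ((hint k).const_mul α) ((hint (k + 1)).const_mul β),
    intervalIntegral.integral_const_mul, intervalIntegral.integral_const_mul]

end Moments

theorem euler_log_integral_recurrence_general {𝕜 : Type*} [RCLike 𝕜] (a : ℝ) (α β : 𝕜)
    (hne : ∀ x ∈ uIcc 0 a, α + β * (x : 𝕜) ≠ 0) (n : ℕ) (hn : 1 ≤ n) :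
    (n : 𝕜) * a * α * ∫ x in (0 : ℝ)..a, (x : 𝕜) ^ (n - 1) / (α + β * (x : 𝕜)) =
      (((n : 𝕜) + 1) * α - (n : 𝕜) * β * a) *
        (∫ x in (0 : ℝ)..a, (x : 𝕜) ^ n / (α + β * (x : 𝕜))) +
      ((n : 𝕜) + 1) * β * ∫ x in (0 : ℝ)..a, (x : 𝕜) ^ (n + 1) / (α + β * (x : 𝕜)) := by
  obtain ⟨m, rfl⟩ := Nat.exists_eq_add_of_le' hn
  have hlow := add_integral_ofReal_pow_div_linear hne m
  have hhigh := add_integral_ofReal_pow_div_linear hne (m + 1)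
  rw [eq_div_iff (Nat.cast_add_one_ne_zero _), RCLike.ofReal_zero, zero_pow (Nat.succ_ne_zero _),
    sub_zero] at hlow hhigh
  rw [Nat.add_sub_cancel]
  push_cast at hhigh ⊢
  linear_combination (a : 𝕜) * hlow - hhigh

theorem euler_log_integral_recurrence (a α β : ℝ) (ha : 0 < a)
    (hne : ∀ x ∈ Set.Icc (0 : ℝ) a, α + β * x ≠ 0) (n : ℕ) (hn : 1 ≤ n) :
    (n : ℝ) * a * α * ∫ x in (0 : ℝ)..a, x ^ (n - 1) / (α + β * x) =
      (((n : ℝ) + 1) * α - (n : ℝ) * β * a) * (∫ x in (0 : ℝ)..a, x ^ n / (α + β * x)) +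
      ((n : ℝ) + 1) * β * ∫ x in (0 : ℝ)..a, x ^ (n + 1) / (α + β * x) := by
  rw [← uIcc_of_le ha.le] at hne
  exact euler_log_integral_recurrence_general a α β hne n hn
end

section
/- Consider the generalized continued fraction with initial term b₀ = 1, partial numerators a_k = k², and partial denominators b_k = 1 for all k ≥ 1. Then the sequence of convergents h_n/k_n converges to 1/log 2. -/
open Filter Topology

/-!
Euler's transformation: for nonzero `c i`, the continued fraction with `b₀ = c 0`,
`b_{k+1} = c (k+1) - c k` and `a_{k+1} = (c k)²` has as its convergents the reciprocals of the
partial sums of `∑ (-1)^i / c i`. Indeed its recurrence makes `x (n+1) - c n * x n` satisfy a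
recurrence of order one, hence `x` can be solved for in closed form. Taking `c i = i + 1` leads to
the alternating harmonic series, whose first `2n` terms sum to `H_{2n} - H_n`, which tends to
`log 2` because `H_n - log n` converges.
-/

section EulerRecurrence

variable {R : Type*} [CommRing R] {K : Type*} [Field K]

theorem sub_mul_eq_of_euler_recurrence {c x : ℕ → R}
    (hx : ∀ n, x (n + 2) = (c (n + 1) - c n) * x (n + 1) + c n ^ 2 * x n) (n : ℕ) :
    x (n + 1) - c n * x n = (-1) ^ n * (∏ i ∈ Finset.range n, c i) * (x 1 - c 0 * x 0) := by
  induction n with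
  | zero => simp
  | succ n ih =>
    calc x (n + 2) - c (n + 1) * x (n + 1)
        = -c n * (x (n + 1) - c n * x n) := by rw [hx]; ring
      _ = -c n * ((-1) ^ n * (∏ i ∈ Finset.range n, c i) * (x 1 - c 0 * x 0)) := by rw [ih]
      _ = (-1) ^ (n + 1) * (∏ i ∈ Finset.range (n + 1), c i) * (x 1 - c 0 * x 0) := by
        rw [Finset.prod_range_succ]; ring

theorem eq_prod_mul_of_euler_recurrence {c x : ℕ → K} (hc : ∀ n, c n ≠ 0)
    (hx : ∀ n, x (n + 2) = (c (n + 1) - c n) * x (n + 1) + c n ^ 2 * x n) (n : ℕ) :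
    x n = (∏ i ∈ Finset.range n, c i) *
      (x 0 + (x 1 - c 0 * x 0) * ∑ i ∈ Finset.range n, (-1) ^ i / c i) := by
  induction n with
  | zero => simp
  | succ n ih =>
    have hsucc := sub_eq_iff_eq_add.mp (sub_mul_eq_of_euler_recurrence hx n)
    rw [hsucc, ih, Finset.prod_range_succ, Finset.sum_range_succ]
    field_simp [hc n]
    ring

theorem div_eq_inv_sum_of_euler_recurrence {c num den : ℕ → K} (hc : ∀ n, c n ≠ 0)
    (hnum0 : num 0 = 1) (hnum1 : num 1 = c 0) (hden0 : den 0 = 0) (hden1 : den 1 = 1)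
    (hnum : ∀ n, num (n + 2) = (c (n + 1) - c n) * num (n + 1) + c n ^ 2 * num n)
    (hden : ∀ n, den (n + 2) = (c (n + 1) - c n) * den (n + 1) + c n ^ 2 * den n) (n : ℕ) :
    num n / den n = (∑ i ∈ Finset.range n, (-1) ^ i / c i)⁻¹ := by
  have hprod : ∏ i ∈ Finset.range n, c i ≠ 0 := Finset.prod_ne_zero_iff.mpr fun i _ => hc i
  have hnum_eq : num n = ∏ i ∈ Finset.range n, c i := by
    simpa [hnum0, hnum1] using eq_prod_mul_of_euler_recurrence hc hnum n
  have hden_eq : den n = (∏ i ∈ Finset.range n, c i) * ∑ i ∈ Finset.range n, (-1) ^ i / c i := by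
    simpa [hden0, hden1] using eq_prod_mul_of_euler_recurrence hc hden n
  rw [hnum_eq, hden_eq, div_mul_cancel_left₀ hprod]

theorem tendsto_div_of_euler_recurrence [TopologicalSpace K] [ContinuousInv₀ K]
    {c num den : ℕ → K} {s : K} (hc : ∀ n, c n ≠ 0)
    (hnum0 : num 0 = 1) (hnum1 : num 1 = c 0) (hden0 : den 0 = 0) (hden1 : den 1 = 1)
    (hnum : ∀ n, num (n + 2) = (c (n + 1) - c n) * num (n + 1) + c n ^ 2 * num n)
    (hden : ∀ n, den (n + 2) = (c (n + 1) - c n) * den (n + 1) + c n ^ 2 * den n)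
    (hs : s ≠ 0) (hsum : Tendsto (fun n => ∑ i ∈ Finset.range n, (-1) ^ i / c i) atTop (𝓝 s)) :
    Tendsto (fun n => num n / den n) atTop (𝓝 s⁻¹) :=
  (hsum.inv₀ hs).congr fun n =>
    (div_eq_inv_sum_of_euler_recurrence hc hnum0 hnum1 hden0 hden1 hnum hden n).symm

end EulerRecurrence

section AlternatingHarmonic

theorem sum_range_two_mul_alternating_eq_harmonic_sub (n : ℕ) :
    ∑ i ∈ Finset.range (2 * n), (-1 : ℚ) ^ i / (i + 1) = harmonic (2 * n) - harmonic n := by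
  induction n with
  | zero => simp
  | succ n ih =>
    rw [Nat.mul_succ, Finset.sum_range_succ, Finset.sum_range_succ, ih]
    simp only [harmonic_succ, pow_succ, pow_mul, Nat.cast_add, Nat.cast_mul, Nat.cast_ofNat,
      Nat.cast_one]
    field_simp
    ring

theorem tendsto_harmonic_mul_sub_harmonic {m : ℕ} (hm : m ≠ 0) :
    Tendsto (fun n : ℕ => (harmonic (m * n) - harmonic n : ℝ)) atTop (𝓝 (Real.log m)) := by
  have hmul : Tendsto (fun n : ℕ => m * n) atTop atTop :=
    tendsto_id.const_mul_atTop' (Nat.pos_of_ne_zero hm)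
  have hdiff := ((Real.tendsto_harmonic_sub_log.comp hmul).sub
    Real.tendsto_harmonic_sub_log).add_const (Real.log m)
  rw [sub_self, zero_add] at hdiff
  refine hdiff.congr' ?_
  filter_upwards [eventually_ne_atTop 0] with n hn
  have hlog : Real.log ((m * n : ℕ) : ℝ) = Real.log m + Real.log n := by
    rw [Nat.cast_mul, Real.log_mul (Nat.cast_ne_zero.mpr hm) (Nat.cast_ne_zero.mpr hn)]
  rw [Function.comp_apply, hlog]
  ring

theorem tendsto_sum_alternating_harmonic :
    Tendsto (fun n => ∑ i ∈ Finset.range n, (-1 : ℝ) ^ i / (i + 1)) atTop (𝓝 (Real.log 2)) := by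
  have hanti : Antitone fun n : ℕ => 1 / ((n : ℝ) + 1) := fun _ _ => Nat.one_div_le_one_div
  obtain ⟨l, hl⟩ := hanti.tendsto_alternating_series_of_tendsto_zero
    tendsto_one_div_add_atTop_nhds_zero_nat
  simp only [mul_one_div] at hl
  have heven : Tendsto (fun n : ℕ => ∑ i ∈ Finset.range (2 * n), (-1 : ℝ) ^ i / (i + 1))
      atTop (𝓝 (Real.log 2)) :=
    (tendsto_harmonic_mul_sub_harmonic two_ne_zero).congr fun n => by
      exact_mod_cast congrArg (Rat.cast : ℚ → ℝ)
        (sum_range_two_mul_alternating_eq_harmonic_sub n).symm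
  have hl_even := hl.comp (tendsto_id.const_mul_atTop' (two_pos (α := ℕ)))
  rwa [tendsto_nhds_unique hl_even heven] at hl

end AlternatingHarmonic

theorem euler_cf_log_two
    (a b num den : ℕ → ℝ)
    (hb0 : b 0 = 1)
    (ha : ∀ k : ℕ, 1 ≤ k → a k = (k : ℝ) ^ 2)
    (hb : ∀ k : ℕ, 1 ≤ k → b k = 1)
    (hnum0 : num 0 = 1) (hnum1 : num 1 = b 0)
    (hden0 : den 0 = 0) (hden1 : den 1 = 1)
    (hnum : ∀ n : ℕ, num (n + 2) = b (n + 1) * num (n + 1) + a (n + 1) * num n)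
    (hden : ∀ n : ℕ, den (n + 2) = b (n + 1) * den (n + 1) + a (n + 1) * den n) :
    Tendsto (fun n : ℕ => num (n + 1) / den (n + 1)) atTop
      (𝓝 (1 / Real.log 2)) := by
  have ha' (n : ℕ) : a (n + 1) = ((n : ℝ) + 1) ^ 2 := by simp [ha]
  have hb' (n : ℕ) : b (n + 1) = ((n + 1 : ℕ) + 1 : ℝ) - (n + 1) := by simp [hb]
  have hlim : Tendsto (fun n => num n / den n) atTop (𝓝 (Real.log 2)⁻¹) :=
    tendsto_div_of_euler_recurrence (c := fun n => (n : ℝ) + 1) Nat.cast_add_one_ne_zero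
      hnum0 (by simp [hnum1, hb0]) hden0 hden1
      (fun n => by rw [hnum, ha', hb']) (fun n => by rw [hden, ha', hb'])
      (Real.log_pos one_lt_two).ne' tendsto_sum_alternating_harmonic
  rw [one_div]
  exact (tendsto_add_atTop_iff_nat 1).mpr hlim
end

section
/- Consider the generalized continued fraction with initial term b₀ = 2, partial numerators a_k = 2k², and partial denominators b_k = k + 2 for all k ≥ 1. Then the sequence of convergents h_n/k_n converges to 1/log(3/2). -/
open Filter Topology

/-!
The numerators and the denominators of the convergents solve the same three-term recurrence, and
the Casoratian `v (n + 1) * u n - u (n + 1) * v n` of two solutions is multiplied by `-a (n + 1)` at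
each step. Hence `v n / u n` is a partial sum of an explicit series (Euler). For `a k = c * k ^ 2`
and `b k = c * (k + 1) - k` the numerators are `c ^ n * n !`, the factorials cancel, and the series
for denominator over numerator is the Taylor series of `log (1 + c⁻¹)`; here `c = 2`.
-/

open scoped Nat

/-- The three-term recurrence satisfied by the numerators and the denominators of the convergents of
the continued fraction `b 0 + a 1 / (b 1 + a 2 / (b 2 + ⋯))`. Indices are shifted by one from the
usual ones, so that `u 0` plays the role of `h₋₁` or `k₋₁`. -/
def IsContinuantSeq {R : Type*} [Semiring R] (a b u : ℕ → R) : Prop :=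
  ∀ n, u (n + 2) = b (n + 1) * u (n + 1) + a (n + 1) * u n

namespace IsContinuantSeq

section CommRing

variable {R : Type*} [CommRing R] {a b u v : ℕ → R}

theorem casoratian_eq_prod (hu : IsContinuantSeq a b u) (hv : IsContinuantSeq a b v) (n : ℕ) :
    v (n + 1) * u n - u (n + 1) * v n =
      (v 1 * u 0 - u 1 * v 0) * ∏ i ∈ Finset.range n, -a (i + 1) := by
  induction n with
  | zero => simp
  | succ n ih =>
    rw [Finset.prod_range_succ, ← mul_assoc, ← ih, hu n, hv n]
    ring

theorem eq_pow_mul_factorial {c : R} (hu : IsContinuantSeq a b u)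
    (ha : ∀ k : ℕ, 1 ≤ k → a k = c * (k : R) ^ 2)
    (hb : ∀ k : ℕ, 1 ≤ k → b k = c * ((k : R) + 1) - k)
    (hu0 : u 0 = 1) (hu1 : u 1 = c) (n : ℕ) : u n = c ^ n * (n ! : R) := by
  induction n using Nat.twoStepInduction with
  | zero => simp [hu0]
  | one => simp [hu1]
  | more n ih ih_succ =>
    rw [hu n, ih, ih_succ, ha _ n.succ_pos, hb _ n.succ_pos]
    simp only [Nat.factorial_succ]
    push_cast
    ring

end CommRing

theorem div_eq_add_sum {K : Type*} [Field K] {a b u v : ℕ → K} (hu : IsContinuantSeq a b u)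
    (hv : IsContinuantSeq a b v) (hu_ne : ∀ n, u n ≠ 0) (n : ℕ) :
    v n / u n = v 0 / u 0 + ∑ i ∈ Finset.range n,
      (v 1 * u 0 - u 1 * v 0) * (∏ j ∈ Finset.range i, -a (j + 1)) / (u (i + 1) * u i) := by
  have increment (i : ℕ) : v (i + 1) / u (i + 1) - v i / u i =
      (v 1 * u 0 - u 1 * v 0) * (∏ j ∈ Finset.range i, -a (j + 1)) / (u (i + 1) * u i) := by
    rw [div_sub_div _ _ (hu_ne _) (hu_ne _), casoratian_eq_prod hu hv]
  simp only [← increment, Finset.sum_range_sub (fun i => v i / u i), add_sub_cancel]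

end IsContinuantSeq

theorem prod_range_neg_mul_succ_sq {R : Type*} [CommRing R] (c : R) (n : ℕ) :
    ∏ i ∈ Finset.range n, -(c * ((i + 1 : ℕ) : R) ^ 2) = (-c) ^ n * (n ! : R) ^ 2 := by
  simp only [← neg_mul, Finset.prod_mul_distrib, Finset.prod_const, Finset.card_range,
    Finset.prod_pow, ← Nat.cast_prod, Finset.prod_range_add_one_eq_factorial]

theorem IsContinuantSeq.div_eq_sum_neg_one_pow_div {K : Type*} [Field K] [CharZero K] {c : K}
    (hc : c ≠ 0) {a b num den : ℕ → K}
    (hnum : IsContinuantSeq a b num) (hden : IsContinuantSeq a b den)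
    (ha : ∀ k : ℕ, 1 ≤ k → a k = c * (k : K) ^ 2)
    (hb : ∀ k : ℕ, 1 ≤ k → b k = c * ((k : K) + 1) - k)
    (hnum0 : num 0 = 1) (hnum1 : num 1 = c) (hden0 : den 0 = 0) (hden1 : den 1 = 1) (n : ℕ) :
    den n / num n = ∑ i ∈ Finset.range n, (-1) ^ i / (c ^ (i + 1) * ((i : K) + 1)) := by
  have num_eq := hnum.eq_pow_mul_factorial ha hb hnum0 hnum1
  have factorial_ne (m : ℕ) : (m ! : K) ≠ 0 := Nat.cast_ne_zero.2 m.factorial_ne_zero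
  have num_ne (m : ℕ) : num m ≠ 0 := by
    rw [num_eq]
    exact mul_ne_zero (pow_ne_zero m hc) (factorial_ne m)
  have casoratian_zero : den 1 * num 0 - num 1 * den 0 = 1 := by simp [hnum0, hden0, hden1]
  rw [hnum.div_eq_add_sum hden num_ne, casoratian_zero, hden0, zero_div, zero_add]
  refine Finset.sum_congr rfl fun i _ => ?_
  have prod_eq : ∏ j ∈ Finset.range i, -a (j + 1) = (-c) ^ i * (i ! : K) ^ 2 := by
    simp only [ha _ (Nat.succ_pos _), prod_range_neg_mul_succ_sq]
  have factorial_ne_i := factorial_ne i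
  rw [one_mul, prod_eq, num_eq, num_eq, neg_pow c, Nat.factorial_succ]
  push_cast
  field_simp

theorem hasSum_neg_one_pow_div_log_one_add_inv {c : ℝ} (hc : 1 < |c|) :
    HasSum (fun i : ℕ => (-1) ^ i / (c ^ (i + 1) * ((i : ℝ) + 1))) (Real.log (1 + c⁻¹)) := by
  have abs_lt_one : |-c⁻¹| < 1 := by
    rw [abs_neg, abs_inv]
    exact inv_lt_one_of_one_lt₀ hc
  have hasSum_log := (Real.hasSum_pow_div_log_of_abs_lt_one abs_lt_one).neg
  rw [neg_neg, sub_neg_eq_add] at hasSum_log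
  refine hasSum_log.congr_fun fun i => ?_
  rw [neg_pow c⁻¹, inv_pow, pow_succ (-1 : ℝ)]
  field_simp

theorem log_one_add_inv_ne_zero {c : ℝ} (hc : 1 < |c|) : Real.log (1 + c⁻¹) ≠ 0 := by
  have c_ne : c ≠ 0 := abs_pos.1 (one_pos.trans hc)
  have inv_gt : -1 < c⁻¹ := (abs_lt.1 (abs_inv c ▸ inv_lt_one_of_one_lt₀ hc)).1
  refine Real.log_ne_zero_of_pos_of_ne_one (by linarith) ?_
  simpa using c_ne

theorem euler_cf_log_three_halves_general {c : ℝ} (hc : 1 < |c|) {a b num den : ℕ → ℝ}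
    (ha : ∀ k : ℕ, 1 ≤ k → a k = c * (k : ℝ) ^ 2)
    (hb : ∀ k : ℕ, 1 ≤ k → b k = c * ((k : ℝ) + 1) - k)
    (hnum0 : num 0 = 1) (hnum1 : num 1 = c) (hden0 : den 0 = 0) (hden1 : den 1 = 1)
    (hnum : IsContinuantSeq a b num) (hden : IsContinuantSeq a b den) :
    Tendsto (fun n => num n / den n) atTop (𝓝 (1 / Real.log (1 + c⁻¹))) := by
  have c_ne : c ≠ 0 := abs_pos.1 (one_pos.trans hc)
  have tendsto_den_div_num : Tendsto (fun n => den n / num n) atTop (𝓝 (Real.log (1 + c⁻¹))) := by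
    simpa only [hnum.div_eq_sum_neg_one_pow_div c_ne hden ha hb hnum0 hnum1 hden0 hden1]
      using (hasSum_neg_one_pow_div_log_one_add_inv hc).tendsto_sum_nat
  simpa only [inv_div, one_div] using tendsto_den_div_num.inv₀ (log_one_add_inv_ne_zero hc)

theorem euler_cf_log_three_halves
    (a b num den : ℕ → ℝ)
    (hb0 : b 0 = 2)
    (ha : ∀ k : ℕ, 1 ≤ k → a k = 2 * (k : ℝ) ^ 2)
    (hb : ∀ k : ℕ, 1 ≤ k → b k = (k : ℝ) + 2)
    (hnum0 : num 0 = 1) (hnum1 : num 1 = b 0)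
    (hden0 : den 0 = 0) (hden1 : den 1 = 1)
    (hnum : ∀ n : ℕ, num (n + 2) = b (n + 1) * num (n + 1) + a (n + 1) * num n)
    (hden : ∀ n : ℕ, den (n + 2) = b (n + 1) * den (n + 1) + a (n + 1) * den n) :
    Tendsto (fun n : ℕ => num (n + 1) / den (n + 1)) atTop
      (𝓝 (1 / Real.log (3 / 2))) := by
  have hb' (k : ℕ) (hk : 1 ≤ k) : b k = 2 * ((k : ℝ) + 1) - k := by rw [hb k hk]; ring
  have tendsto_convergents := euler_cf_log_three_halves_general (c := 2) (by norm_num) ha hb'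
    hnum0 (hnum1.trans hb0) hden0 hden1 hnum hden
  rw [show (1 : ℝ) + 2⁻¹ = 3 / 2 by norm_num] at tendsto_convergents
  exact (tendsto_add_atTop_iff_nat 1).2 tendsto_convergents
end

section
/- Consider the generalized continued fraction with initial term b₀ = 1, partial numerators a_k = (2k−1)², and partial denominators b_k = 2 for all k ≥ 1. Then the sequence of convergents h_n/k_n converges to 4/π. -/
open Filter Topology

/-!
Euler's transformation turns an alternating series `1/c₀ - 1/c₁ + 1/c₂ - ⋯` into the continued
fraction `c₀ + c₀²/((c₁ - c₀) + c₁²/((c₂ - c₁) + ⋯))`, whose convergents are the reciprocals of the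
partial sums. The reason is that the defect `uₙ₊₁ - cₙ uₙ` of any solution of the three-term
recurrence is multiplied by `-cₙ` at each step, which allows the recurrence to be solved explicitly.
Brouncker's fraction is the case `cₙ = 2n + 1`, where the series is Leibniz's series for `π / 4`.
-/

/-- The three-term recurrence for the numerators and denominators of Euler's continued fraction
`c₀ + c₀²/((c₁ - c₀) + c₁²/((c₂ - c₁) + ⋯))`. The index is shifted by one: `u 0` and `u 1` stand for
the terms of index `-1` and `0`. -/
def EulerRecurrence {R : Type*} [CommRing R] (c u : ℕ → R) : Prop :=
  ∀ n, u (n + 2) = (c (n + 1) - c n) * u (n + 1) + c n ^ 2 * u n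

namespace EulerRecurrence

theorem succ_sub_mul {R : Type*} [CommRing R] {c u : ℕ → R} (hu : EulerRecurrence c u) (n : ℕ) :
    u (n + 1) - c n * u n = (-1) ^ n * (∏ i ∈ Finset.range n, c i) * (u 1 - c 0 * u 0) := by
  induction n with
  | zero => simp
  | succ n ih =>
    calc u (n + 2) - c (n + 1) * u (n + 1)
        = -c n * (u (n + 1) - c n * u n) := by rw [hu n]; ring
      _ = (-1) ^ (n + 1) * (∏ i ∈ Finset.range (n + 1), c i) * (u 1 - c 0 * u 0) := by
        rw [ih, Finset.prod_range_succ]; ring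

section Field

variable {K : Type*} [Field K] {c u num den : ℕ → K}

theorem eq_prod_mul_add_sum (hu : EulerRecurrence c u) (hc : ∀ n, c n ≠ 0) (n : ℕ) :
    u n = (∏ i ∈ Finset.range n, c i) *
      (u 0 + (u 1 - c 0 * u 0) * ∑ i ∈ Finset.range n, (-1) ^ i / c i) := by
  induction n with
  | zero => simp
  | succ n ih =>
    rw [sub_eq_iff_eq_add.mp (hu.succ_sub_mul n), ih, Finset.prod_range_succ,
      Finset.sum_range_succ]
    field [hc n]

/-- Where a partial sum vanishes, in particular at `n = 0`, both sides are the junk value `0`. -/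
theorem num_div_den (hnum : EulerRecurrence c num) (hden : EulerRecurrence c den)
    (hc : ∀ n, c n ≠ 0) (hnum0 : num 0 = 1) (hnum1 : num 1 = c 0) (hden0 : den 0 = 0)
    (hden1 : den 1 = 1) (n : ℕ) :
    num n / den n = (∑ i ∈ Finset.range n, (-1) ^ i / c i)⁻¹ := by
  have hnum_eq : num n = ∏ i ∈ Finset.range n, c i := by
    simpa [hnum0, hnum1] using hnum.eq_prod_mul_add_sum hc n
  have hden_eq : den n = (∏ i ∈ Finset.range n, c i) * ∑ i ∈ Finset.range n, (-1) ^ i / c i := by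
    simpa [hden0, hden1] using hden.eq_prod_mul_add_sum hc n
  have hprod : ∏ i ∈ Finset.range n, c i ≠ 0 := Finset.prod_ne_zero_iff.mpr fun i _ => hc i
  rw [hnum_eq, hden_eq, div_mul_cancel_left₀ hprod]

theorem tendsto_num_div_den [TopologicalSpace K] [ContinuousInv₀ K] {s : K}
    (hnum : EulerRecurrence c num) (hden : EulerRecurrence c den)
    (hc : ∀ n, c n ≠ 0) (hnum0 : num 0 = 1) (hnum1 : num 1 = c 0) (hden0 : den 0 = 0)
    (hden1 : den 1 = 1) (hs : s ≠ 0)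
    (hsum : Tendsto (fun n => ∑ i ∈ Finset.range n, (-1) ^ i / c i) atTop (𝓝 s)) :
    Tendsto (fun n => num n / den n) atTop (𝓝 s⁻¹) :=
  (hsum.inv₀ hs).congr fun n =>
    (num_div_den hnum hden hc hnum0 hnum1 hden0 hden1 n).symm

end Field

end EulerRecurrence

theorem brouncker_cf_four_div_pi
    (a b num den : ℕ → ℝ)
    (hb0 : b 0 = 1)
    (ha : ∀ k : ℕ, 1 ≤ k → a k = (2 * (k : ℝ) - 1) ^ 2)
    (hb : ∀ k : ℕ, 1 ≤ k → b k = 2)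
    (hnum0 : num 0 = 1) (hnum1 : num 1 = b 0)
    (hden0 : den 0 = 0) (hden1 : den 1 = 1)
    (hnum : ∀ n : ℕ, num (n + 2) = b (n + 1) * num (n + 1) + a (n + 1) * num n)
    (hden : ∀ n : ℕ, den (n + 2) = b (n + 1) * den (n + 1) + a (n + 1) * den n) :
    Tendsto (fun n : ℕ => num (n + 1) / den (n + 1)) atTop
      (𝓝 (4 / Real.pi)) := by
  have euler {u : ℕ → ℝ} (hu : ∀ n, u (n + 2) = b (n + 1) * u (n + 1) + a (n + 1) * u n) :
      EulerRecurrence (fun n : ℕ => 2 * (n : ℝ) + 1) u := fun n => by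
    rw [hu n, ha _ n.succ_pos, hb _ n.succ_pos]
    push_cast
    ring
  have hodd (n : ℕ) : 2 * (n : ℝ) + 1 ≠ 0 := by positivity
  rw [tendsto_add_atTop_iff_nat (f := fun n => num n / den n) 1, ← inv_div]
  exact (euler hnum).tendsto_num_div_den (euler hden) hodd hnum0 (by simp [hnum1, hb0])
    hden0 hden1 (by positivity) Real.tendsto_sum_pi_div_four
end

section
/- Let α be a real number with α ≥ 1. Consider the generalized continued fraction with initial term b₀ = α + 1, partial numerators a_k = (2k−1)²·α, and partial denominators b_k = (2k+1)·α − (2k−1) for all k ≥ 1. Then the sequence of convergents h_n/k_n converges to 1 + √α / arctan(1/√α). -/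
/-!
The recurrence `x (n + 2) = (u (n + 1) - p n) * x (n + 1) + p n * u n * x n` factors: the quantity
`x (n + 1) - u n * x n` is multiplied by `-p n` at each step. Dividing by `u 0 * ⋯ * u n` turns this
into a telescoping sum, so a quotient of two solutions is a Möbius transform of the partial sums of
`∑ (-p 0) ⋯ (-p (n - 1)) / (u 0 ⋯ u n)`. For `p n = 2 * n + 1` and `u n = (2 * n + 1) * α` this
series is `∑ (-1) ^ n / ((2 * n + 1) * α ^ (n + 1)) = arctan (1 / √α) / √α`, and the Möbius
transform is `s ↦ (1 + s) / s`. At `α = 1` the series converges only conditionally, which is why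
limits of partial sums appear instead of `HasSum`.
-/

open Filter Topology

open Finset (range)

/-- The three-term recurrence satisfied by the numerators and by the denominators of Euler's
continued fraction `u 0 + p 0 * u 0 / (u 1 - p 0 + p 1 * u 1 / (u 2 - p 1 + ⋯))`. The initial values
are left free, and the index is shifted by one: `x (n + 1)` belongs to the `n`-th convergent. -/
def IsEulerRecurrence {R : Type*} [CommRing R] (p u x : ℕ → R) : Prop :=
  ∀ n, x (n + 2) = (u (n + 1) - p n) * x (n + 1) + p n * u n * x n

/-- The terms of the series whose partial sums are encoded by Euler's continued fraction: the first
one is `1 / u 0` and the ratio of consecutive terms is `-p n / u (n + 1)`. -/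
def eulerTerm {K : Type*} [Field K] (p u : ℕ → K) (n : ℕ) : K :=
  (∏ i ∈ range n, -p i) / ∏ i ∈ range (n + 1), u i

namespace IsEulerRecurrence

theorem succ_sub_mul_eq {R : Type*} [CommRing R] {p u x : ℕ → R} (hx : IsEulerRecurrence p u x)
    (n : ℕ) : x (n + 1) - u n * x n = (∏ i ∈ range n, -p i) * (x 1 - u 0 * x 0) := by
  induction n with
  | zero => simp
  | succ n ih =>
    calc x (n + 2) - u (n + 1) * x (n + 1)
        = -p n * (x (n + 1) - u n * x n) := by rw [hx n]; ring
      _ = (∏ i ∈ range (n + 1), -p i) * (x 1 - u 0 * x 0) := by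
        rw [ih, Finset.prod_range_succ]; ring

variable {K : Type*} [Field K] {p u x y : ℕ → K}

theorem div_prod_eq (hx : IsEulerRecurrence p u x) (hu : ∀ n, u n ≠ 0) (n : ℕ) :
    x n / ∏ i ∈ range n, u i =
      x 0 + (x 1 - u 0 * x 0) * ∑ j ∈ range n, eulerTerm p u j := by
  induction n with
  | zero => simp
  | succ n ih =>
    have hprod : ∏ i ∈ range n, u i ≠ 0 := Finset.prod_ne_zero_iff.mpr fun i _ => hu i
    have hstep : x (n + 1) / ∏ i ∈ range (n + 1), u i =
        x n / ∏ i ∈ range n, u i + (x 1 - u 0 * x 0) * eulerTerm p u n := by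
      rw [sub_eq_iff_eq_add.mp (hx.succ_sub_mul_eq n), eulerTerm, Finset.prod_range_succ u]
      field_simp [hu n]
      ring
    rw [hstep, ih, Finset.sum_range_succ, mul_add, add_assoc]

variable [TopologicalSpace K] [IsTopologicalDivisionRing K] {s : K}

theorem tendsto_div_prod (hx : IsEulerRecurrence p u x) (hu : ∀ n, u n ≠ 0)
    (hs : Tendsto (fun n => ∑ j ∈ range n, eulerTerm p u j) atTop (𝓝 s)) :
    Tendsto (fun n => x n / ∏ i ∈ range n, u i) atTop (𝓝 (x 0 + (x 1 - u 0 * x 0) * s)) := by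
  simpa only [hx.div_prod_eq hu] using (hs.const_mul (x 1 - u 0 * x 0)).const_add (x 0)

theorem tendsto_div (hx : IsEulerRecurrence p u x) (hy : IsEulerRecurrence p u y)
    (hu : ∀ n, u n ≠ 0)
    (hs : Tendsto (fun n => ∑ j ∈ range n, eulerTerm p u j) atTop (𝓝 s))
    (hne : y 0 + (y 1 - u 0 * y 0) * s ≠ 0) :
    Tendsto (fun n => x n / y n) atTop
      (𝓝 ((x 0 + (x 1 - u 0 * x 0) * s) / (y 0 + (y 1 - u 0 * y 0) * s))) :=
  ((hx.tendsto_div_prod hu hs).div (hy.tendsto_div_prod hu hs) hne).congr fun _ =>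
    div_div_div_cancel_right₀ (Finset.prod_ne_zero_iff.mpr fun i _ => hu i) _ _

end IsEulerRecurrence

theorem eulerTerm_mul_const {K : Type*} [Field K] {p : ℕ → K} (hp : ∀ n, p n ≠ 0) (c : K) (n : ℕ) :
    eulerTerm p (fun i => p i * c) n = (-1) ^ n / (p n * c ^ (n + 1)) := by
  have hprod : ∏ i ∈ range n, p i ≠ 0 := Finset.prod_ne_zero_iff.mpr fun i _ => hp i
  rw [eulerTerm, Finset.prod_neg, Finset.prod_mul_distrib, Finset.prod_const, Finset.card_range,
    Finset.card_range, Finset.prod_range_succ, mul_comm ((-1) ^ n), mul_assoc,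
    mul_div_mul_left _ _ hprod]

theorem tendsto_sum_arctan {x : ℝ} (hx : |x| ≤ 1) :
    Tendsto (fun n => ∑ j ∈ range n, (-1 : ℝ) ^ j * x ^ (2 * j + 1) / (2 * j + 1)) atTop
      (𝓝 (Real.arctan x)) := by
  rcases hx.lt_or_eq with hlt | heq
  · simpa using (Real.hasSum_arctan (x := x) hlt).tendsto_sum_nat
  · rcases eq_or_eq_neg_of_abs_eq heq with rfl | rfl
    · simpa using Real.tendsto_sum_pi_div_four
    · simpa [Real.arctan_neg, pow_succ, pow_mul, neg_div] using Real.tendsto_sum_pi_div_four.neg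

theorem tendsto_sum_arctan_one_div_sqrt {α : ℝ} (hα : 1 ≤ α) :
    Tendsto (fun n => ∑ j ∈ range n, (-1 : ℝ) ^ j / ((2 * j + 1) * α ^ (j + 1))) atTop
      (𝓝 (Real.arctan (1 / √α) / √α)) := by
  have hx : |1 / √α| ≤ 1 := by
    rw [abs_of_nonneg (by positivity)]
    exact div_le_one_of_le₀ (Real.one_le_sqrt.mpr hα) (Real.sqrt_nonneg α)
  refine ((tendsto_sum_arctan hx).div_const √α).congr fun n => ?_
  rw [Finset.sum_div]
  refine Finset.sum_congr rfl fun j _ => ?_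
  have hpow : α ^ (j + 1) = √α ^ (2 * j + 1) * √α := by
    rw [← pow_succ, show 2 * j + 1 + 1 = 2 * (j + 1) by ring, pow_mul,
      Real.sq_sqrt (zero_le_one.trans hα)]
  rw [hpow, one_div, inv_pow]
  field_simp

theorem isEulerRecurrence_odd {R : Type*} [CommRing R] {α : R} {a b x : ℕ → R}
    (ha : ∀ k : ℕ, 1 ≤ k → a k = (2 * (k : R) - 1) ^ 2 * α)
    (hb : ∀ k : ℕ, 1 ≤ k → b k = (2 * (k : R) + 1) * α - (2 * (k : R) - 1))
    (hx : ∀ n, x (n + 2) = b (n + 1) * x (n + 1) + a (n + 1) * x n) :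
    IsEulerRecurrence (fun n => 2 * (n : R) + 1) (fun n => (2 * n + 1) * α) x := by
  intro n
  rw [hx, ha _ n.succ_pos, hb _ n.succ_pos]
  push_cast
  ring

theorem euler_cf_arctan
    (α : ℝ) (a b num den : ℕ → ℝ)
    (hα : 1 ≤ α)
    (hb0 : b 0 = α + 1)
    (ha : ∀ k : ℕ, 1 ≤ k → a k = (2 * (k : ℝ) - 1) ^ 2 * α)
    (hb : ∀ k : ℕ, 1 ≤ k → b k = (2 * (k : ℝ) + 1) * α - (2 * (k : ℝ) - 1))
    (hnum0 : num 0 = 1) (hnum1 : num 1 = b 0)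
    (hden0 : den 0 = 0) (hden1 : den 1 = 1)
    (hnum : ∀ n : ℕ, num (n + 2) = b (n + 1) * num (n + 1) + a (n + 1) * num n)
    (hden : ∀ n : ℕ, den (n + 2) = b (n + 1) * den (n + 1) + a (n + 1) * den n) :
    Tendsto (fun n : ℕ => num (n + 1) / den (n + 1)) atTop
      (𝓝 (1 + Real.sqrt α / Real.arctan (1 / Real.sqrt α))) := by
  have hα0 : 0 < α := zero_lt_one.trans_le hα
  have hodd (n : ℕ) : (2 * n + 1 : ℝ) ≠ 0 := by positivity
  have hsum : Tendsto (fun n => ∑ j ∈ range n,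
      eulerTerm (fun i => 2 * (i : ℝ) + 1) (fun i => (2 * i + 1) * α) j) atTop
      (𝓝 (Real.arctan (1 / √α) / √α)) := by
    simpa only [eulerTerm_mul_const hodd] using tendsto_sum_arctan_one_div_sqrt hα
  have hne : Real.arctan (1 / √α) / √α ≠ 0 :=
    (div_pos (Real.arctan_pos.mpr (by positivity)) (by positivity)).ne'
  have hlim : Tendsto (fun n => num n / den n) atTop
      (𝓝 ((1 + Real.arctan (1 / √α) / √α) / (Real.arctan (1 / √α) / √α))) := by
    simpa [hnum0, hnum1, hb0, hden0, hden1] using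
      (isEulerRecurrence_odd ha hb hnum).tendsto_div (isEulerRecurrence_odd ha hb hden)
        (fun n => mul_ne_zero (hodd n) hα0.ne') hsum (by simpa [hden0, hden1] using hne)
  rw [add_div, div_self hne, one_div_div, add_comm] at hlim
  exact hlim.comp (tendsto_add_atTop_nat 1)
end

section
/- Consider the generalized continued fraction with initial term b₀ = 4, partial numerators a_k = 3·(2k−1)², and partial denominators b_k = 4·(k+1) for all k ≥ 1. Then the sequence of convergents h_n/k_n converges to 1 + 6·√3/π. -/
open Filter Topology

/-!
Euler's transformation of a series into a continued fraction. If
`q (k + 1) * t (k + 1) = -(p k * t k)`, then both the products `∏ i < n, q i` and these products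
times the partial sums of `t` solve the recurrence
`u (n + 2) = (q (n + 1) - p n) * u (n + 1) + p n * q n * u n`. If `q 0 * t 0 = 1`, the second
solution is the sequence of denominators, and the first differs from the numerators by a multiple
of it, so the convergents are, up to an additive constant, the inverses of the partial sums. The
series of `arctan (1 / √3) = π / 6` has this shape with `p k = 2 * k + 1` and
`q k = 3 * (2 * k + 1)`.
-/

/-- The three-term recurrence satisfied by the numerators and the denominators of the convergents of
a continued fraction with partial numerators `a` and partial denominators `b`. Indices are shifted
by one from the classical ones, `u n` standing for `h_{n-1}` or `k_{n-1}`; the values `a 0` and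
`b 0` do not enter. -/
def IsContinuant {R : Type*} [Semiring R] (a b u : ℕ → R) : Prop :=
  ∀ n, u (n + 2) = b (n + 1) * u (n + 1) + a (n + 1) * u n

namespace IsContinuant

theorem ext {R : Type*} [Semiring R] {a b u v : ℕ → R} (hu : IsContinuant a b u)
    (hv : IsContinuant a b v) (h0 : u 0 = v 0) (h1 : u 1 = v 1) : u = v := by
  funext n
  induction n using Nat.twoStepInduction with
  | zero => exact h0
  | one => exact h1
  | more n ihn ihn1 => rw [hu, hv, ihn, ihn1]

theorem add {R : Type*} [Semiring R] {a b u v : ℕ → R} (hu : IsContinuant a b u)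
    (hv : IsContinuant a b v) : IsContinuant a b (u + v) := fun n => by
  simp only [Pi.add_apply, hu n, hv n, mul_add, add_add_add_comm]

theorem const_smul {R : Type*} [CommSemiring R] {a b u : ℕ → R} (hu : IsContinuant a b u) (c : R) :
    IsContinuant a b (c • u) := fun n => by
  simp only [Pi.smul_apply, smul_eq_mul, hu n, mul_add, mul_left_comm c]

section Euler

variable {R : Type*} [CommRing R] {a b p q t u v : ℕ → R}

theorem prod_range (ha : ∀ n, a (n + 1) = p n * q n) (hb : ∀ n, b (n + 1) = q (n + 1) - p n) :
    IsContinuant a b (fun n => ∏ i ∈ Finset.range n, q i) := fun n => by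
  simp only [Finset.prod_range_succ, ha, hb]
  ring

theorem prod_range_mul_sum_range (ha : ∀ n, a (n + 1) = p n * q n)
    (hb : ∀ n, b (n + 1) = q (n + 1) - p n) (ht : ∀ n, q (n + 1) * t (n + 1) = -(p n * t n)) :
    IsContinuant a b (fun n => (∏ i ∈ Finset.range n, q i) * ∑ i ∈ Finset.range n, t i) :=
  fun n => by
  simp only [Finset.prod_range_succ, Finset.sum_range_succ, ha, hb]
  linear_combination (∏ i ∈ Finset.range n, q i) * q n * ht n

theorem eq_prod_range_mul_sum_range (hv : IsContinuant a b v) (hv0 : v 0 = 0) (hv1 : v 1 = 1)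
    (ha : ∀ n, a (n + 1) = p n * q n) (hb : ∀ n, b (n + 1) = q (n + 1) - p n)
    (ht0 : q 0 * t 0 = 1) (ht : ∀ n, q (n + 1) * t (n + 1) = -(p n * t n)) :
    v = fun n => (∏ i ∈ Finset.range n, q i) * ∑ i ∈ Finset.range n, t i :=
  hv.ext (prod_range_mul_sum_range ha hb ht) (by simp [hv0]) (by simp [hv1, ht0])

theorem eq_prod_range_add_smul (hu : IsContinuant a b u) (hv : IsContinuant a b v)
    (hu0 : u 0 = 1) (hv0 : v 0 = 0) (hv1 : v 1 = 1)
    (ha : ∀ n, a (n + 1) = p n * q n) (hb : ∀ n, b (n + 1) = q (n + 1) - p n) :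
    u = (fun n => ∏ i ∈ Finset.range n, q i) + (u 1 - q 0) • v :=
  hu.ext ((prod_range ha hb).add (hv.const_smul _)) (by simp [hu0, hv0]) (by simp [hv1])

end Euler

theorem tendsto_div_of_tendsto_sum {K : Type*} [Field K] [TopologicalSpace K] [ContinuousAdd K]
    [ContinuousInv₀ K] [T1Space K] {a b p q t u v : ℕ → K} {s : K}
    (hu : IsContinuant a b u) (hv : IsContinuant a b v)
    (hu0 : u 0 = 1) (hv0 : v 0 = 0) (hv1 : v 1 = 1)
    (ha : ∀ n, a (n + 1) = p n * q n) (hb : ∀ n, b (n + 1) = q (n + 1) - p n)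
    (ht0 : q 0 * t 0 = 1) (ht : ∀ n, q (n + 1) * t (n + 1) = -(p n * t n))
    (hq : ∀ n, q n ≠ 0) (hs : s ≠ 0)
    (hts : Tendsto (fun n => ∑ i ∈ Finset.range n, t i) atTop (𝓝 s)) :
    Tendsto (fun n => u n / v n) atTop (𝓝 (u 1 - q 0 + s⁻¹)) := by
  refine ((hts.inv₀ hs).const_add (u 1 - q 0)).congr' ?_
  filter_upwards [hts.eventually_ne hs] with n hn
  have hprod : ∏ i ∈ Finset.range n, q i ≠ 0 := Finset.prod_ne_zero_iff.2 fun i _ => hq i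
  have hvn := congrFun (hv.eq_prod_range_mul_sum_range hv0 hv1 ha hb ht0 ht) n
  have hun := congrFun (hu.eq_prod_range_add_smul hv hu0 hv0 hv1 ha hb) n
  simp only [Pi.add_apply, Pi.smul_apply, smul_eq_mul] at hun
  rw [hun, hvn]
  field_simp
  ring

-- The factor `c` is an equivalence transformation, here to clear the denominator of `x ^ 2`.
theorem tendsto_div_arctan {a b u v : ℕ → ℝ} {c x : ℝ}
    (hu : IsContinuant a b u) (hv : IsContinuant a b v)
    (hu0 : u 0 = 1) (hv0 : v 0 = 0) (hv1 : v 1 = 1) (hc : c ≠ 0) (hx0 : x ≠ 0) (hx1 : ‖x‖ < 1)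
    (ha : ∀ n : ℕ, a (n + 1) = (c * x * (2 * n + 1)) ^ 2)
    (hb : ∀ n : ℕ, b (n + 1) = c * (2 * n + 3 - (2 * n + 1) * x ^ 2)) :
    Tendsto (fun n => u n / v n) atTop (𝓝 (u 1 - c + c * x / Real.arctan x)) := by
  have hsum := (Real.hasSum_arctan hx1).tendsto_sum_nat.const_mul (c * x)⁻¹
  simp only [Finset.mul_sum] at hsum
  have hlim := hu.tendsto_div_of_tendsto_sum hv hu0 hv0 hv1
    (p := fun n => c * x ^ 2 * (2 * n + 1)) (q := fun n => c * (2 * n + 1))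
    (fun n => by rw [ha]; ring) (fun n => by rw [hb]; push_cast; ring)
    (by push_cast; field_simp; ring) (fun n => by push_cast; field_simp; ring)
    (fun n => by positivity) (by simp [hc, hx0]) hsum
  convert hlim using 2
  simp [div_eq_mul_inv, mul_comm]

end IsContinuant

theorem euler_cf_six_sqrt_three_div_pi
    (a b num den : ℕ → ℝ)
    (hb0 : b 0 = 4)
    (ha : ∀ k : ℕ, 1 ≤ k → a k = 3 * (2 * (k : ℝ) - 1) ^ 2)
    (hb : ∀ k : ℕ, 1 ≤ k → b k = 4 * ((k : ℝ) + 1))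
    (hnum0 : num 0 = 1) (hnum1 : num 1 = b 0)
    (hden0 : den 0 = 0) (hden1 : den 1 = 1)
    (hnum : ∀ n : ℕ, num (n + 2) = b (n + 1) * num (n + 1) + a (n + 1) * num n)
    (hden : ∀ n : ℕ, den (n + 2) = b (n + 1) * den (n + 1) + a (n + 1) * den n) :
    Tendsto (fun n : ℕ => num (n + 1) / den (n + 1)) atTop
      (𝓝 (1 + 6 * Real.sqrt 3 / Real.pi)) := by
  have hsq : ((√3)⁻¹ : ℝ) ^ 2 = 1 / 3 := by simp
  have hlt : ‖((√3)⁻¹ : ℝ)‖ < 1 := by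
    rw [← sq_lt_one_iff₀ (norm_nonneg _), Real.norm_eq_abs, sq_abs, hsq]
    norm_num
  have ha' (n : ℕ) : a (n + 1) = (3 * (√3)⁻¹ * (2 * n + 1)) ^ 2 := by
    rw [ha _ n.succ_pos, mul_pow, mul_pow, hsq]
    push_cast
    ring
  have hb' (n : ℕ) : b (n + 1) = 3 * (2 * n + 3 - (2 * n + 1) * (√3)⁻¹ ^ 2) := by
    rw [hb _ n.succ_pos, hsq]
    push_cast
    ring
  have hlim := IsContinuant.tendsto_div_arctan hnum hden hnum0 hden0 hden1 three_ne_zero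
    (by positivity) hlt ha' hb'
  have hval : num 1 - 3 + 3 * (√3)⁻¹ / Real.arctan (√3)⁻¹ = 1 + 6 * √3 / Real.pi := by
    rw [hnum1, hb0, Real.arctan_inv_sqrt_three, ← div_eq_mul_inv, Real.div_sqrt]
    ring
  exact (tendsto_add_atTop_iff_nat 1).2 (hval ▸ hlim)
end

section
/- Let α, β be real numbers with α ≥ β > 0. Consider the generalized continued fraction with initial term b₀ = α + β, partial numerators a_k = (2k−1)²·α·β, and partial denominators b_k = (2k+1)·α − (2k−1)·β for all k ≥ 1. Then the sequence of convergents h_n/k_n converges to β + √(αβ) / arctan(√(β/α)). -/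
open Filter Topology

/-!
Euler's transformation turns a series `∑ tₖ` whose consecutive terms satisfy
`dₙ₊₁ tₙ₊₁ = -cₙ tₙ` into a continued fraction: the products `Pₙ = d₀ ⋯ dₙ₋₁` and
`Pₙ (t₀ + ⋯ + tₙ₋₁)` both solve the recurrence
`Xₙ₊₂ = (dₙ₊₁ - cₙ) Xₙ₊₁ + cₙ dₙ Xₙ`, so up to constants they are the numerators and
denominators of convergents. With `β = α x²`, the choice `cₙ = (2n + 1) β`, `dₙ = (2n + 1) α`
yields the arctangent series of `x`, which converges to `arctan x` on all of `[-1, 1]`.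
-/

/-- `num (n + 1) / den (n + 1)` is the `n`-th convergent of the continued fraction with partial
numerators `a 1, a 2, …` and partial denominators `b 0, b 1, …`. The index of `num` and `den` is
shifted by one, so that the recurrence starts at index `-1` of the usual convention. -/
structure IsContFractConvergents {R : Type*} [Semiring R] (a b num den : ℕ → R) : Prop where
  num_zero : num 0 = 1
  num_one : num 1 = b 0
  den_zero : den 0 = 0
  den_one : den 1 = 1
  num_add_two : ∀ n, num (n + 2) = b (n + 1) * num (n + 1) + a (n + 1) * num n
  den_add_two : ∀ n, den (n + 2) = b (n + 1) * den (n + 1) + a (n + 1) * den n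

namespace IsContFractConvergents

section Ring

variable {R : Type*} [CommRing R] {a b num den c d t : ℕ → R} {γ : R}

theorem num_eq_mul_den_add_prod (h : IsContFractConvergents a b num den)
    (hb0 : b 0 = γ + d 0) (ha : ∀ n, a (n + 1) = c n * d n)
    (hb : ∀ n, b (n + 1) = d (n + 1) - c n) (n : ℕ) :
    num n = γ * den n + ∏ k ∈ Finset.range n, d k := by
  induction n using Nat.twoStepInduction with
  | zero => simp [h.num_zero, h.den_zero]
  | one => simp [h.num_one, h.den_one, hb0]
  | more n ih ih' =>
    rw [h.num_add_two, h.den_add_two, ih, ih', ha, hb]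
    simp only [Finset.prod_range_succ]
    ring

theorem mul_den_eq_prod_mul_sum (h : IsContFractConvergents a b num den)
    (ha : ∀ n, a (n + 1) = c n * d n) (hb : ∀ n, b (n + 1) = d (n + 1) - c n)
    (ht : ∀ n, d (n + 1) * t (n + 1) = -(c n * t n)) (n : ℕ) :
    d 0 * t 0 * den n = (∏ k ∈ Finset.range n, d k) * ∑ k ∈ Finset.range n, t k := by
  induction n using Nat.twoStepInduction with
  | zero => simp [h.den_zero]
  | one => simp [h.den_one]
  | more n ih ih' =>
    simp only [Finset.prod_range_succ, Finset.sum_range_succ] at ih' ⊢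
    rw [h.den_add_two, ha, hb]
    linear_combination (d (n + 1) - c n) * ih' + c n * d n * ih
      - (∏ k ∈ Finset.range n, d k) * d n * ht n

end Ring

section Field

variable {K : Type*} [Field K] {a b num den c d t : ℕ → K} {γ : K}

theorem num_div_den_eq (h : IsContFractConvergents a b num den)
    (hb0 : b 0 = γ + d 0) (ha : ∀ n, a (n + 1) = c n * d n)
    (hb : ∀ n, b (n + 1) = d (n + 1) - c n)
    (ht : ∀ n, d (n + 1) * t (n + 1) = -(c n * t n)) (hd : ∀ n, d n ≠ 0) {n : ℕ}
    (hS : ∑ k ∈ Finset.range n, t k ≠ 0) :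
    num n / den n = γ + d 0 * t 0 / ∑ k ∈ Finset.range n, t k := by
  have hden := h.mul_den_eq_prod_mul_sum ha hb ht n
  have hprod : ∏ k ∈ Finset.range n, d k ≠ 0 := Finset.prod_ne_zero_iff.2 fun k _ => hd k
  have hden_ne : den n ≠ 0 := right_ne_zero_of_mul (hden ▸ mul_ne_zero hprod hS)
  rw [h.num_eq_mul_den_add_prod hb0 ha hb, add_div, mul_div_cancel_right₀ _ hden_ne,
    (div_eq_div_iff hden_ne hS).2 hden.symm]

variable [TopologicalSpace K] [IsTopologicalDivisionRing K] [T1Space K]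

theorem tendsto_of_tendsto_sum (h : IsContFractConvergents a b num den)
    (hb0 : b 0 = γ + d 0) (ha : ∀ n, a (n + 1) = c n * d n)
    (hb : ∀ n, b (n + 1) = d (n + 1) - c n)
    (ht : ∀ n, d (n + 1) * t (n + 1) = -(c n * t n)) (hd : ∀ n, d n ≠ 0) {s : K} (hs : s ≠ 0)
    (hsum : Tendsto (fun n => ∑ k ∈ Finset.range n, t k) atTop (𝓝 s)) :
    Tendsto (fun n => num n / den n) atTop (𝓝 (γ + d 0 * t 0 / s)) := by
  refine ((tendsto_const_nhds.div hsum hs).const_add γ).congr' ?_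
  filter_upwards [hsum.eventually_ne hs] with n hn
  exact (h.num_div_den_eq hb0 ha hb ht hd hn).symm

end Field

end IsContFractConvergents

/-- The `k`-th term of the Taylor series of the arctangent at `0`. -/
def arctanTerm {K : Type*} [Field K] (x : K) (k : ℕ) : K :=
  (-1) ^ k * x ^ (2 * k + 1) / ((2 * k + 1 : ℕ) : K)

section ArctanTerm

variable {K : Type*} [Field K]

theorem arctanTerm_zero (x : K) : arctanTerm x 0 = x := by
  simp [arctanTerm]

theorem arctanTerm_neg (x : K) (k : ℕ) : arctanTerm (-x) k = -arctanTerm x k := by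
  simp only [arctanTerm, (odd_two_mul_add_one k).neg_pow, mul_neg, neg_div]

variable [CharZero K]

theorem two_mul_add_one_mul_arctanTerm (x : K) (k : ℕ) :
    (2 * k + 1) * arctanTerm x k = (-1) ^ k * x ^ (2 * k + 1) := by
  have hk : ((2 * k + 1 : ℕ) : K) ≠ 0 := Nat.cast_ne_zero.2 (Nat.succ_ne_zero _)
  rw [arctanTerm]
  exact_mod_cast mul_div_cancel₀ ((-1) ^ k * x ^ (2 * k + 1)) hk

variable [TopologicalSpace K] [IsTopologicalDivisionRing K] [T1Space K]

theorem IsContFractConvergents.tendsto_of_tendsto_sum_arctanTerm {a b num den : ℕ → K}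
    (h : IsContFractConvergents a b num den) {α β x s : K} (hα : α ≠ 0) (hβ : β = α * x ^ 2)
    (hb0 : b 0 = α + β)
    (ha : ∀ k : ℕ, 1 ≤ k → a k = (2 * (k : K) - 1) ^ 2 * α * β)
    (hb : ∀ k : ℕ, 1 ≤ k → b k = (2 * (k : K) + 1) * α - (2 * (k : K) - 1) * β)
    (hs : s ≠ 0) (hsum : Tendsto (fun n => ∑ k ∈ Finset.range n, arctanTerm x k) atTop (𝓝 s)) :
    Tendsto (fun n => num n / den n) atTop (𝓝 (β + α * x / s)) := by
  have hratio (n : ℕ) : (2 * (n + 1 : ℕ) + 1) * α * arctanTerm x (n + 1) =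
      -((2 * n + 1) * β * arctanTerm x n) := by
    rw [mul_right_comm, two_mul_add_one_mul_arctanTerm, mul_right_comm _ β,
      two_mul_add_one_mul_arctanTerm, hβ]
    ring
  have hd (n : ℕ) : (2 * n + 1) * α ≠ 0 :=
    mul_ne_zero (by exact_mod_cast Nat.succ_ne_zero (2 * n)) hα
  have hlim := h.tendsto_of_tendsto_sum (γ := β) (c := fun n => (2 * n + 1) * β)
    (d := fun n => (2 * n + 1) * α) (by rw [hb0]; push_cast; ring)
    (fun n => by rw [ha _ n.succ_pos]; push_cast; ring)
    (fun n => by rw [hb _ n.succ_pos]; push_cast; ring) hratio hd hs hsum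
  simpa [arctanTerm_zero] using hlim

end ArctanTerm

theorem tendsto_sum_arctanTerm {x : ℝ} (hx : |x| ≤ 1) :
    Tendsto (fun n => ∑ k ∈ Finset.range n, arctanTerm x k) atTop (𝓝 (Real.arctan x)) := by
  have at_one : Tendsto (fun n => ∑ k ∈ Finset.range n, arctanTerm (1 : ℝ) k) atTop
      (𝓝 (Real.arctan 1)) := by
    simpa [arctanTerm, Real.arctan_one] using Real.tendsto_sum_pi_div_four
  rcases hx.lt_or_eq with hlt | heq
  · exact (Real.hasSum_arctan hlt).tendsto_sum_nat
  · rcases eq_or_eq_neg_of_abs_eq heq with rfl | rfl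
    · exact at_one
    · simpa only [arctanTerm_neg, Finset.sum_neg_distrib, Real.arctan_neg] using at_one.neg

theorem sqrt_mul_eq_mul_sqrt_div {α : ℝ} (hα : 0 ≤ α) (β : ℝ) :
    √(α * β) = α * √(β / α) := by
  rw [Real.sqrt_mul hα, Real.sqrt_div' β hα, mul_div_left_comm, Real.div_sqrt, mul_comm]

theorem euler_cf_arctan_general_general {α β : ℝ} {a b num den : ℕ → ℝ}
    (h : IsContFractConvergents a b num den) (hpos : 0 < β / α) (hle : β / α ≤ 1)
    (hb0 : b 0 = α + β)
    (ha : ∀ k : ℕ, 1 ≤ k → a k = (2 * (k : ℝ) - 1) ^ 2 * α * β)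
    (hb : ∀ k : ℕ, 1 ≤ k → b k = (2 * (k : ℝ) + 1) * α - (2 * (k : ℝ) - 1) * β) :
    Tendsto (fun n => num (n + 1) / den (n + 1)) atTop
      (𝓝 (β + α * √(β / α) / Real.arctan √(β / α))) := by
  have hα : α ≠ 0 := (div_ne_zero_iff.1 hpos.ne').2
  have hβ : β = α * √(β / α) ^ 2 := by rw [Real.sq_sqrt hpos.le, mul_div_cancel₀ _ hα]
  have harctan : Real.arctan √(β / α) ≠ 0 := (Real.arctan_pos.2 (Real.sqrt_pos.2 hpos)).ne'
  have hsqrt : |√(β / α)| ≤ 1 := by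
    rwa [abs_of_nonneg (Real.sqrt_nonneg _), Real.sqrt_le_one]
  exact (h.tendsto_of_tendsto_sum_arctanTerm hα hβ hb0 ha hb harctan
    (tendsto_sum_arctanTerm hsqrt)).comp (tendsto_add_atTop_nat 1)

theorem euler_cf_arctan_general
    (α β : ℝ) (a b num den : ℕ → ℝ)
    (hβ : 0 < β) (hαβ : β ≤ α)
    (hb0 : b 0 = α + β)
    (ha : ∀ k : ℕ, 1 ≤ k → a k = (2 * (k : ℝ) - 1) ^ 2 * α * β)
    (hb : ∀ k : ℕ, 1 ≤ k → b k = (2 * (k : ℝ) + 1) * α - (2 * (k : ℝ) - 1) * β)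
    (hnum0 : num 0 = 1) (hnum1 : num 1 = b 0)
    (hden0 : den 0 = 0) (hden1 : den 1 = 1)
    (hnum : ∀ n : ℕ, num (n + 2) = b (n + 1) * num (n + 1) + a (n + 1) * num n)
    (hden : ∀ n : ℕ, den (n + 2) = b (n + 1) * den (n + 1) + a (n + 1) * den n) :
    Tendsto (fun n : ℕ => num (n + 1) / den (n + 1)) atTop
      (𝓝 (β + Real.sqrt (α * β) / Real.arctan (Real.sqrt (β / α)))) := by
  have hα : 0 < α := hβ.trans_le hαβ
  rw [sqrt_mul_eq_mul_sqrt_div hα.le]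
  exact euler_cf_arctan_general_general ⟨hnum0, hnum1, hden0, hden1, hnum, hden⟩
    (div_pos hβ hα) ((div_le_one hα).2 hαβ) hb0 ha hb
end

section
/- Let α be a real number and n ≥ 1 a natural number. Then n·∫₀¹ x^{n-1}·e^{αx} dx = (n + 1 − α)·∫₀¹ x^n·e^{αx} dx + α·∫₀¹ x^{n+1}·e^{αx} dx. -/
/-!
Write `M s = ∫₀¹ x ^ s * exp (α x) dx`. Integrating the derivative of `x ^ s * exp (α x)` gives
`s * M (s - 1) + α * M s = exp α` for every `s > 0`. The right-hand side does not depend on `s`,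
so the left-hand sides for `n` and `n + 1` agree. Their difference is the integral of the
derivative of `x ^ n * exp (α x) * (1 - x)`.
-/

open NormedSpace Set MeasureTheory

theorem integral_rpow_smul_add_integral_rpow_smul_deriv {E : Type*} [NormedAddCommGroup E]
    [NormedSpace ℝ E] [CompleteSpace E] {r b : ℝ} (hr : 0 < r) {f f' : ℝ → E}
    (hf : ContinuousOn f (uIcc 0 b)) (hff' : ∀ x ∈ uIoo 0 b, HasDerivAt f (f' x) x)
    (hf' : IntervalIntegrable f' volume 0 b) :
    r • (∫ x in (0 : ℝ)..b, x ^ (r - 1) • f x) + ∫ x in (0 : ℝ)..b, x ^ r • f' x =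
      b ^ r • f b := by
  have rpow_continuous : ContinuousOn (fun x : ℝ => x ^ r) (uIcc 0 b) :=
    (Real.continuous_rpow_const hr.le).continuousOn
  have rpow_deriv (x : ℝ) (hx : x ∈ uIoo 0 b) :
      HasDerivAt (fun y : ℝ => y ^ r) (r * x ^ (r - 1)) x :=
    Real.hasDerivAt_rpow_const (.inl fun h => left_notMem_uIoo (h ▸ hx))
  have rpow_integrable : IntervalIntegrable (fun x : ℝ => r * x ^ (r - 1)) volume 0 b :=
    (intervalIntegral.intervalIntegrable_rpow' (by linarith)).const_mul r
  rw [intervalIntegral.integral_smul_deriv_eq_deriv_smul_of_hasDerivAt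
    rpow_continuous hf rpow_deriv hff' rpow_integrable hf']
  simp [mul_smul, Real.zero_rpow hr.ne']

section BanachAlgebra

variable {A : Type*} [NormedRing A] [NormedAlgebra ℝ A] [CompleteSpace A]

theorem integral_rpow_smul_exp_add_mul_integral_rpow_smul_exp
    {r : ℝ} (hr : 0 < r) (a : A) (b : ℝ) :
    r • (∫ x in (0 : ℝ)..b, x ^ (r - 1) • exp (x • a)) +
      a * ∫ x in (0 : ℝ)..b, x ^ r • exp (x • a) = b ^ r • exp (b • a) := by
  have exp_deriv (x : ℝ) : HasDerivAt (fun y : ℝ => exp (y • a)) (a * exp (x • a)) x :=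
    hasDerivAt_exp_smul_const' a x
  have exp_continuous : Continuous fun x : ℝ => exp (x • a) :=
    continuous_iff_continuousAt.2 fun x => (exp_deriv x).continuousAt
  have integrable : IntervalIntegrable (fun x : ℝ => x ^ r • exp (x • a)) volume 0 b :=
    ((Real.continuous_rpow_const hr.le).smul exp_continuous).intervalIntegrable 0 b
  have mul_integral : a * ∫ x in (0 : ℝ)..b, x ^ r • exp (x • a) =
      ∫ x in (0 : ℝ)..b, x ^ r • (a * exp (x • a)) := by
    simpa using ((ContinuousLinearMap.mul ℝ A a).intervalIntegral_comp_comm integrable).symm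
  rw [mul_integral]
  exact integral_rpow_smul_add_integral_rpow_smul_deriv hr exp_continuous.continuousOn
    (fun x _ => exp_deriv x) ((exp_continuous.const_mul a).intervalIntegrable 0 b)

theorem euler_exp_integral_recurrence_general {r : ℝ} (hr : 0 < r) (a : A) :
    r • (∫ x in (0 : ℝ)..1, x ^ (r - 1) • exp (x • a)) =
      (algebraMap ℝ A (r + 1) - a) * (∫ x in (0 : ℝ)..1, x ^ r • exp (x • a)) +
      a * ∫ x in (0 : ℝ)..1, x ^ (r + 1) • exp (x • a) := by
  have at_r := integral_rpow_smul_exp_add_mul_integral_rpow_smul_exp hr a 1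
  have at_r_add_one :=
    integral_rpow_smul_exp_add_mul_integral_rpow_smul_exp (add_pos hr one_pos) a 1
  simp only [add_sub_cancel_right, Real.one_rpow] at at_r at_r_add_one
  rw [sub_mul, ← Algebra.smul_def, sub_add_eq_add_sub, at_r_add_one, ← at_r, add_sub_cancel_right]

end BanachAlgebra

theorem euler_exp_integral_recurrence (α : ℝ) (n : ℕ) (hn : 1 ≤ n) :
    (n : ℝ) * ∫ x in (0 : ℝ)..1, x ^ (n - 1) * Real.exp (α * x) =
      ((n : ℝ) + 1 - α) * (∫ x in (0 : ℝ)..1, x ^ n * Real.exp (α * x)) +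
      α * ∫ x in (0 : ℝ)..1, x ^ (n + 1) * Real.exp (α * x) := by
  have recurrence := euler_exp_integral_recurrence_general (Nat.cast_pos.2 hn) α
  simpa only [← Nat.cast_pred hn, ← Nat.cast_add_one, Real.rpow_natCast, ← Real.exp_eq_exp_ℝ,
    smul_eq_mul, Algebra.algebraMap_self_apply, mul_comm α] using recurrence
end

section
/- Let α be a real number with 0 < α ≤ 1. Consider the generalized continued fraction with initial term b₀ = 1 − α, partial numerators a_k = k·α, and partial denominators b_k = k + 1 − α for all k ≥ 1. Then the sequence of convergents h_n/k_n converges to α/(e^α − 1). -/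
open Filter Topology

/-!
Numerators and denominators solve the same three-term recurrence, which for the defect
`d n = x (n + 1) - (n + 1) * x n` reads `d (n + 1) = -α * d n`. So the defect is geometric, and
`α * x n / n!` telescopes to an affine function of the partial sums of the series of `exp (-α)`.
For the numerators its limit is `α * exp (-α)`, for the denominators `1 - exp (-α)`.
-/

open scoped Nat

/-- The three-term recurrence with the coefficients of Euler's continued fraction for
`α / (exp α - 1)`, satisfied by both the numerators and the denominators of its convergents.
Indices are shifted by one, so that `x 0` is the entry of index `-1`. -/
def IsEulerCFSolution {R : Type*} [CommRing R] (α : R) (x : ℕ → R) : Prop :=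
  ∀ n : ℕ, x (n + 2) = ((n : R) + 2 - α) * x (n + 1) + ((n : R) + 1) * α * x n

namespace IsEulerCFSolution

section CommRing

variable {R : Type*} [CommRing R] {α : R} {x : ℕ → R}

theorem of_coefficients {a b : ℕ → R}
    (ha : ∀ k : ℕ, 1 ≤ k → a k = (k : R) * α)
    (hb : ∀ k : ℕ, 1 ≤ k → b k = (k : R) + 1 - α)
    (hx : ∀ n : ℕ, x (n + 2) = b (n + 1) * x (n + 1) + a (n + 1) * x n) :
    IsEulerCFSolution α x := by
  intro n
  rw [hx n, ha (n + 1) n.succ_pos, hb (n + 1) n.succ_pos]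
  push_cast
  ring

theorem succ_sub_mul_eq (hx : IsEulerCFSolution α x) (n : ℕ) :
    x (n + 1) - ((n : R) + 1) * x n = (-α) ^ n * (x 1 - x 0) := by
  induction n with
  | zero => simp
  | succ n ih =>
    rw [hx n, pow_succ]
    push_cast
    linear_combination (-α) * ih

end CommRing

section Field

variable {K : Type*} [Field K] [CharZero K] {α : K} {x : ℕ → K}

theorem mul_div_factorial_eq (hx : IsEulerCFSolution α x) (n : ℕ) :
    α * x n / n ! =
      α * x 0 + (x 1 - x 0) * (1 - ∑ k ∈ Finset.range (n + 1), (-α) ^ k / (k ! : K)) := by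
  induction n with
  | zero => simp
  | succ n ih =>
    have hstep : α * x (n + 1) / (n + 1)! =
        α * x n / (n ! : K) - (x 1 - x 0) * ((-α) ^ (n + 1) / (n + 1)!) := by
      have hn : (n ! : K) ≠ 0 := Nat.cast_ne_zero.mpr n.factorial_ne_zero
      have hn' : (n : K) + 1 ≠ 0 := n.cast_add_one_ne_zero
      rw [eq_add_of_sub_eq (hx.succ_sub_mul_eq n), Nat.factorial_succ]
      push_cast
      field_simp
      ring
    rw [hstep, ih, Finset.sum_range_succ _ (n + 1)]
    ring

theorem tendsto_mul_div_factorial [TopologicalSpace K] [IsTopologicalRing K]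
    (hx : IsEulerCFSolution α x) {e : K} (he : HasSum (fun k : ℕ => (-α) ^ k / (k ! : K)) e) :
    Tendsto (fun n : ℕ => α * x n / n !) atTop (𝓝 (α * x 0 + (x 1 - x 0) * (1 - e))) := by
  simp only [hx.mul_div_factorial_eq]
  have hpartial := he.tendsto_sum_nat.comp (tendsto_add_atTop_nat 1)
  exact ((hpartial.const_sub 1).const_mul _).const_add _

end Field

end IsEulerCFSolution

theorem tendsto_eulerCF_convergents {K : Type*} [Field K] [CharZero K] [TopologicalSpace K]
    [IsTopologicalDivisionRing K] {α e : K} {num den : ℕ → K} (hα : α ≠ 0) (he1 : e ≠ 1)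
    (he : HasSum (fun k : ℕ => (-α) ^ k / (k ! : K)) e)
    (hnum : IsEulerCFSolution α num) (hden : IsEulerCFSolution α den)
    (hnum0 : num 0 = 1) (hnum1 : num 1 = 1 - α) (hden0 : den 0 = 0) (hden1 : den 1 = 1) :
    Tendsto (fun n : ℕ => num n / den n) atTop (𝓝 (α * e / (1 - e))) := by
  have hnum_lim : Tendsto (fun n : ℕ => α * num n / n !) atTop (𝓝 (α * e)) := by
    convert hnum.tendsto_mul_div_factorial he using 2
    rw [hnum0, hnum1]
    ring
  have hden_lim : Tendsto (fun n : ℕ => α * den n / n !) atTop (𝓝 (1 - e)) := by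
    convert hden.tendsto_mul_div_factorial he using 2
    rw [hden0, hden1]
    ring
  refine (hnum_lim.div hden_lim (sub_ne_zero.mpr he1.symm)).congr fun n => ?_
  have hn : (n ! : K) ≠ 0 := Nat.cast_ne_zero.mpr n.factorial_ne_zero
  rw [Pi.div_apply, div_div_div_cancel_right₀ hn, mul_div_mul_left _ _ hα]

theorem euler_cf_exp_general {K : Type*} [NontriviallyNormedField K] [CharZero K]
    [CompleteSpace K] (α : K) (a b num den : ℕ → K)
    (hα : α ∈ Metric.eball (0 : K) (NormedSpace.expSeries K K).radius)
    (hexp : NormedSpace.exp α ≠ 1)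
    (hb0 : b 0 = 1 - α)
    (ha : ∀ k : ℕ, 1 ≤ k → a k = (k : K) * α)
    (hb : ∀ k : ℕ, 1 ≤ k → b k = (k : K) + 1 - α)
    (hnum0 : num 0 = 1) (hnum1 : num 1 = b 0)
    (hden0 : den 0 = 0) (hden1 : den 1 = 1)
    (hnum : ∀ n : ℕ, num (n + 2) = b (n + 1) * num (n + 1) + a (n + 1) * num n)
    (hden : ∀ n : ℕ, den (n + 2) = b (n + 1) * den (n + 1) + a (n + 1) * den n) :
    Tendsto (fun n : ℕ => num (n + 1) / den (n + 1)) atTop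
      (𝓝 (α / (NormedSpace.exp α - 1))) := by
  have hα_ne : α ≠ 0 := fun h => hexp (h ▸ NormedSpace.exp_zero)
  have hα_neg : -α ∈ Metric.eball (0 : K) (NormedSpace.expSeries K K).radius := by
    simpa only [Metric.mem_eball, edist_zero_right, enorm_neg] using hα
  have hsum : HasSum (fun k : ℕ => (-α) ^ k / (k ! : K)) (NormedSpace.exp α)⁻¹ := by
    rw [← NormedSpace.exp_neg_of_mem_ball K hα]
    exact NormedSpace.expSeries_div_hasSum_exp_of_mem_ball K _ hα_neg
  have hexp_ne : NormedSpace.exp α ≠ 0 := (NormedSpace.isUnit_exp_of_mem_ball hα).ne_zero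
  have hlimit : α * (NormedSpace.exp α)⁻¹ / (1 - (NormedSpace.exp α)⁻¹) =
      α / (NormedSpace.exp α - 1) := by
    rw [← mul_div_mul_right _ _ hexp_ne, inv_mul_cancel_right₀ hexp_ne, sub_mul, one_mul,
      inv_mul_cancel₀ hexp_ne]
  rw [← hlimit]
  exact (tendsto_eulerCF_convergents hα_ne (inv_ne_one.mpr hexp) hsum
    (.of_coefficients ha hb hnum) (.of_coefficients ha hb hden)
    hnum0 (hnum1.trans hb0) hden0 hden1).comp (tendsto_add_atTop_nat 1)

theorem euler_cf_exp
    (α : ℝ) (a b num den : ℕ → ℝ)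
    (hα0 : 0 < α) (hα1 : α ≤ 1)
    (hb0 : b 0 = 1 - α)
    (ha : ∀ k : ℕ, 1 ≤ k → a k = (k : ℝ) * α)
    (hb : ∀ k : ℕ, 1 ≤ k → b k = (k : ℝ) + 1 - α)
    (hnum0 : num 0 = 1) (hnum1 : num 1 = b 0)
    (hden0 : den 0 = 0) (hden1 : den 1 = 1)
    (hnum : ∀ n : ℕ, num (n + 2) = b (n + 1) * num (n + 1) + a (n + 1) * num n)
    (hden : ∀ n : ℕ, den (n + 2) = b (n + 1) * den (n + 1) + a (n + 1) * den n) :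
    Tendsto (fun n : ℕ => num (n + 1) / den (n + 1)) atTop
      (𝓝 (α / (Real.exp α - 1))) := by
  have hexp : Real.exp α ≠ 1 := (Real.one_lt_exp_iff.mpr hα0).ne'
  rw [Real.exp_eq_exp_ℝ] at hexp ⊢
  exact euler_cf_exp_general α a b num den
    (NormedSpace.expSeries_radius_eq_top ℝ ℝ ▸ edist_lt_top _ _) hexp
    hb0 ha hb hnum0 hnum1 hden0 hden1 hnum hden
end

section
/- Consider the generalized continued fraction with initial term b₀ = 2, partial numerator a₁ = 1 and a_k = k − 1 for k ≥ 2, and partial denominators b_k = k for all k ≥ 1. Then the sequence of convergents h_n/k_n converges to e. -/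
open Filter Topology

/-!
Multiplying a solution of `u (n + 2) = (n + 2) * u (n + 1) + (n + 1) * u n` by `n + 1` turns the
recurrence into that of the derangement numbers, `D (n + 2) = (n + 1) * (D n + D (n + 1))`, shifted
by two. The factorials solve the latter as well, so they and the derangement numbers span its
solutions. The numerators of the convergents correspond to the factorials and the denominators to
the derangement numbers, and `D n / n !` tends to `1 / e`.
-/

open scoped Nat

theorem factorial_add_two_eq_mul_add (n : ℕ) : (n + 2)! = (n + 1) * (n ! + (n + 1)!) := by
  simp only [Nat.factorial_succ]
  ring

theorem succ_mul_eq_numDerangements_add_factorial {R : Type*} [CommRing R] {u : ℕ → R}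
    (hu : ∀ n : ℕ, u (n + 2) = (n + 2) * u (n + 1) + (n + 1) * u n) (n : ℕ) :
    (n + 1) * u n =
      (3 * u 0 - 2 * u 1) * numDerangements (n + 2) + (u 1 - u 0) * (n + 2)! := by
  induction n using Nat.twoStepInduction with
  | zero =>
    rw [show numDerangements (0 + 2) = 1 from rfl, show (0 + 2)! = 2 from rfl]
    push_cast
    ring
  | one =>
    rw [show numDerangements (1 + 2) = 2 from rfl, show (1 + 2)! = 6 from rfl]
    push_cast
    ring
  | more n ih ih_succ =>
    rw [hu, numDerangements_add_two (n + 2), factorial_add_two_eq_mul_add (n + 2)]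
    push_cast at ih_succ ⊢
    linear_combination ((n : R) + 3) * (ih + ih_succ)

theorem tendsto_factorial_div_numDerangements :
    Tendsto (fun n : ℕ => (n ! : ℝ) / numDerangements n) atTop (𝓝 (Real.exp 1)) := by
  simpa [Real.exp_neg] using numDerangements_tendsto_inv_e.inv₀ (Real.exp_ne_zero (-1))

theorem euler_cf_e
    (a b num den : ℕ → ℝ)
    (hb0 : b 0 = 2)
    (ha1 : a 1 = 1) (ha : ∀ k : ℕ, 2 ≤ k → a k = (k : ℝ) - 1)
    (hb : ∀ k : ℕ, 1 ≤ k → b k = (k : ℝ))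
    (hnum0 : num 0 = 1) (hnum1 : num 1 = b 0)
    (hden0 : den 0 = 0) (hden1 : den 1 = 1)
    (hnum : ∀ n : ℕ, num (n + 2) = b (n + 1) * num (n + 1) + a (n + 1) * num n)
    (hden : ∀ n : ℕ, den (n + 2) = b (n + 1) * den (n + 1) + a (n + 1) * den n) :
    Tendsto (fun n : ℕ => num (n + 1) / den (n + 1)) atTop
      (𝓝 (Real.exp 1)) := by
  have ha_add_two (n : ℕ) : a (n + 2) = n + 1 := by rw [ha _ (by omega)]; push_cast; ring
  have hb_add_two (n : ℕ) : b (n + 2) = n + 2 := by rw [hb _ (by omega)]; push_cast; rfl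
  have hb1 : b 1 = 1 := by simpa using hb 1 le_rfl
  have hnum2 : num 2 = 3 := by rw [hnum 0, hb1, ha1, hnum0, hnum1, hb0]; norm_num
  have hden2 : den 2 = 1 := by rw [hden 0, hb1, ha1, hden0, hden1]; norm_num
  have num_eq (n : ℕ) : (n + 1) * num (n + 1) = (n + 2)! := by
    rw [succ_mul_eq_numDerangements_add_factorial (u := fun n => num (n + 1))
      fun n => by rw [hnum, ha_add_two, hb_add_two]]
    norm_num [hnum1, hnum2, hb0]
  have den_eq (n : ℕ) : (n + 1) * den (n + 1) = numDerangements (n + 2) := by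
    rw [succ_mul_eq_numDerangements_add_factorial (u := fun n => den (n + 1))
      fun n => by rw [hden, ha_add_two, hb_add_two]]
    norm_num [hden1, hden2]
  refine (tendsto_factorial_div_numDerangements.comp (tendsto_add_atTop_nat 2)).congr fun n => ?_
  rw [Function.comp_apply, ← num_eq, ← den_eq, mul_div_mul_left _ _ n.cast_add_one_ne_zero]
end

section
/- Consider the generalized continued fraction with initial term b₀ = 2, partial numerators a_k = 3k, and partial denominators b_k = 3k + 2 for all k ≥ 1. Then the sequence of convergents h_n/k_n converges to 1/(e^{1/3} − 1). -/
open Filter Topology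

/-!
The numerators and the denominators solve the same three-term recurrence
`u (n + 2) = (x (n + 2) - 1) u (n + 1) + x (n + 1) u n`, with `x = 3`. It has a first integral: the
quantity `u (n + 1) - x (n + 1) u n` merely changes sign at each step. Dividing by
`x ^ (n + 1) (n + 1)!` therefore makes `u n / (x ^ n n!)` telescope to partial sums of the series
of `exp (-1 / x)`. In the limit the normalized numerators and denominators are `exp (-1 / x)` and
`1 - exp (-1 / x)`.
-/

/-- The three-term recurrence satisfied by the numerators and by the denominators of the convergents
of `x - 1 + x / (2x - 1 + 2x / (3x - 1 + ⋯))`, indexed as in `h₋₁, h₀, h₁, …`: the value `u 0`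
belongs to the index `-1`. -/
def IsEulerContinuant {R : Type*} [CommRing R] (x : R) (u : ℕ → R) : Prop :=
  ∀ n : ℕ, u (n + 2) = (x * (n + 2) - 1) * u (n + 1) + x * (n + 1) * u n

namespace IsEulerContinuant

theorem of_coeffs {R : Type*} [CommRing R] {x : R} {a b u : ℕ → R}
    (ha : ∀ k : ℕ, 1 ≤ k → a k = x * k) (hb : ∀ k : ℕ, 1 ≤ k → b k = x * k + (x - 1))
    (hu : ∀ n : ℕ, u (n + 2) = b (n + 1) * u (n + 1) + a (n + 1) * u n) :
    IsEulerContinuant x u := by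
  intro n
  rw [hu, ha _ n.succ_pos, hb _ n.succ_pos]
  push_cast
  ring

theorem succ_sub_mul {R : Type*} [CommRing R] {x : R} {u : ℕ → R} (hu : IsEulerContinuant x u)
    (n : ℕ) : u (n + 1) - x * (n + 1) * u n = (-1) ^ n * (u 1 - x * u 0) := by
  induction n with
  | zero => simp
  | succ n ih =>
    rw [hu n, pow_succ]
    push_cast
    linear_combination -ih

theorem div_pow_mul_factorial {K : Type*} [Field K] [CharZero K] {x : K} {u : ℕ → K}
    (hu : IsEulerContinuant x u) (hx : x ≠ 0) (n : ℕ) :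
    u n / (x ^ n * n.factorial) =
      u 0 + (u 1 - x * u 0) * (1 - ∑ k ∈ Finset.range (n + 1), (-x⁻¹) ^ k / k.factorial) := by
  induction n with
  | zero => simp
  | succ n ih =>
    have hstep : u (n + 1) / (x ^ (n + 1) * (n + 1).factorial) =
        u n / (x ^ n * n.factorial) -
          (u 1 - x * u 0) * ((-x⁻¹) ^ (n + 1) / (n + 1).factorial) := by
      have hn : (n + 1 : K) ≠ 0 := n.cast_add_one_ne_zero
      have hfact : (n.factorial : K) ≠ 0 := mod_cast n.factorial_ne_zero
      rw [eq_add_of_sub_eq (hu.succ_sub_mul n), Nat.factorial_succ,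
        neg_pow x⁻¹, inv_pow]
      push_cast
      field_simp
      ring
    rw [hstep, ih, Finset.sum_range_succ _ (n + 1)]
    ring

theorem tendsto_div_pow_mul_factorial {𝕜 : Type*} [NormedField 𝕜] [NormedAlgebra ℚ 𝕜]
    [CompleteSpace 𝕜] {x : 𝕜} {u : ℕ → 𝕜} (hu : IsEulerContinuant x u) (hx : x ≠ 0) :
    Tendsto (fun n : ℕ => u n / (x ^ n * n.factorial)) atTop
      (𝓝 (u 0 + (u 1 - x * u 0) * (1 - NormedSpace.exp (-x⁻¹)))) := by
  have : CharZero 𝕜 := algebraRat.charZero 𝕜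
  have hsum : Tendsto (fun n : ℕ => ∑ k ∈ Finset.range (n + 1), (-x⁻¹) ^ k / (k.factorial : 𝕜))
      atTop (𝓝 (NormedSpace.exp (-x⁻¹))) :=
    (tendsto_add_atTop_iff_nat 1).2 (NormedSpace.expSeries_div_hasSum_exp (-x⁻¹)).tendsto_sum_nat
  simpa only [hu.div_pow_mul_factorial hx] using ((hsum.const_sub 1).const_mul _).const_add (u 0)

end IsEulerContinuant

theorem euler_cf_cbrt_e_general {𝕜 : Type*} [NormedField 𝕜] [NormedAlgebra ℚ 𝕜] [CompleteSpace 𝕜]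
    {x : 𝕜} (hx : x ≠ 0) (hexp : NormedSpace.exp x⁻¹ ≠ 1)
    (a b num den : ℕ → 𝕜)
    (hb0 : b 0 = x - 1)
    (ha : ∀ k : ℕ, 1 ≤ k → a k = x * k)
    (hb : ∀ k : ℕ, 1 ≤ k → b k = x * k + (x - 1))
    (hnum0 : num 0 = 1) (hnum1 : num 1 = b 0)
    (hden0 : den 0 = 0) (hden1 : den 1 = 1)
    (hnum : ∀ n : ℕ, num (n + 2) = b (n + 1) * num (n + 1) + a (n + 1) * num n)
    (hden : ∀ n : ℕ, den (n + 2) = b (n + 1) * den (n + 1) + a (n + 1) * den n) :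
    Tendsto (fun n : ℕ => num (n + 1) / den (n + 1)) atTop
      (𝓝 (1 / (NormedSpace.exp x⁻¹ - 1))) := by
  have : CharZero 𝕜 := algebraRat.charZero 𝕜
  have hnum_lim : Tendsto (fun n : ℕ => num n / (x ^ n * n.factorial)) atTop
      (𝓝 (NormedSpace.exp x⁻¹)⁻¹) := by
    simpa [hnum0, hnum1, hb0, NormedSpace.exp_neg] using
      (IsEulerContinuant.of_coeffs ha hb hnum).tendsto_div_pow_mul_factorial hx
  have hden_lim : Tendsto (fun n : ℕ => den n / (x ^ n * n.factorial)) atTop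
      (𝓝 (1 - (NormedSpace.exp x⁻¹)⁻¹)) := by
    simpa [hden0, hden1, NormedSpace.exp_neg] using
      (IsEulerContinuant.of_coeffs ha hb hden).tendsto_div_pow_mul_factorial hx
  have hscale (n : ℕ) : x ^ n * (n.factorial : 𝕜) ≠ 0 :=
    mul_ne_zero (pow_ne_zero n hx) (mod_cast n.factorial_ne_zero)
  have hden_ne : 1 - (NormedSpace.exp x⁻¹)⁻¹ ≠ 0 := sub_ne_zero.2 (inv_ne_one.2 hexp).symm
  have hexp_ne : NormedSpace.exp x⁻¹ ≠ 0 := (NormedSpace.isUnit_exp x⁻¹).ne_zero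
  have hlim : (NormedSpace.exp x⁻¹)⁻¹ / (1 - (NormedSpace.exp x⁻¹)⁻¹) =
      1 / (NormedSpace.exp x⁻¹ - 1) := by
    rw [← mul_div_mul_left _ _ hexp_ne, mul_sub, mul_inv_cancel₀ hexp_ne, mul_one]
  rw [tendsto_add_atTop_iff_nat (f := fun n => num n / den n) 1, ← hlim]
  simpa only [Pi.div_def, div_div_div_cancel_right₀ (hscale _)] using
    hnum_lim.div hden_lim hden_ne

theorem euler_cf_cbrt_e
    (a b num den : ℕ → ℝ)
    (hb0 : b 0 = 2)
    (ha : ∀ k : ℕ, 1 ≤ k → a k = 3 * (k : ℝ))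
    (hb : ∀ k : ℕ, 1 ≤ k → b k = 3 * (k : ℝ) + 2)
    (hnum0 : num 0 = 1) (hnum1 : num 1 = b 0)
    (hden0 : den 0 = 0) (hden1 : den 1 = 1)
    (hnum : ∀ n : ℕ, num (n + 2) = b (n + 1) * num (n + 1) + a (n + 1) * num n)
    (hden : ∀ n : ℕ, den (n + 2) = b (n + 1) * den (n + 1) + a (n + 1) * den n) :
    Tendsto (fun n : ℕ => num (n + 1) / den (n + 1)) atTop
      (𝓝 (1 / (Real.exp (1 / 3) - 1))) := by
  simpa only [Real.exp_eq_exp_ℝ, one_div] using euler_cf_cbrt_e_general three_ne_zero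
    (by rw [← Real.exp_eq_exp_ℝ]; norm_num) a b num den (by rw [hb0]; norm_num) ha
    (fun k hk => by rw [hb k hk]; ring) hnum0 hnum1 hden0 hden1 hnum hden
end
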